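/- arXiv:2304.07664 — 4 statements merged into one kernel-verified Lean document; each statement's English description precedes it below -/
import Mathlib

section
/- Suppose (Y, Z, P, Q, J, K) are functions from ℝ to ℝ with Y, Z, P, Q differentiable, Y(t), Z(t) ∈ (0,1) for all t, Y(0) = Z(0) = 1/2, P(0) = Q(0) = 1, J(0) = K(0) = ln 2, and satisfying for all t the equations Y' = ln(2)·P·Y·ln(Y), Z' = −ln(2)·Q·Z·ln(Z), P' = −ln(2)·(1−J)·P·Q, Q' = ln(2)·(1−K)·P·Q, −1 = (Y/ln Z)·J + (Z/ln Y)·K, and 0 = ((Z·ln Z + Y)/(Z·(ln Z)²))·J − ((Y·ln Y + Z)/(Y·(ln Y)²))·K. Let S > 0, let u, v : [0,S] → ℝ be continuously differentiable, and set t(s) := u(s) − v(s). Suppose X : [0,S] → ℝ is differentiable with X(s) ∈ (0,1) for all s, X(0) = Y(t(0)), and X'(s) = ln(2)·P(t(s))·X(s)·ln(X(s))·u'(s) − ln(2)·Q(t(s))·(1 − X(s))·ln(1 − X(s))·v'(s) for all s ∈ [0,S]. Then X(S) = Y(t(S)). -/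
/-!
Put `F = Y + Z - 1` and `G = P Y ln Y - Q Z ln Z`. Then `F' = ln 2 * G`, and `J`, `K` enter `G'`
only through `J Y ln Y + K Z ln Z`, which the first algebraic constraint evaluates to `-ln Y ln Z`.
Multiplying this last term by `1 = Y + Z - F` makes `G'` a linear combination of `F` and `G` with
continuous coefficients. So `(F, G)` solves a homogeneous linear system; it vanishes at time `0`,
hence identically: `Z = 1 - Y` and `P Y ln Y = Q (1 - Y) ln (1 - Y)`.

The second identity says that the horizontal and the vertical infinitesimal squaring maps move the
point `Y t` at opposite speeds. Hence `Y (u - v)` solves the differential equation imposed on `X`,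
and uniqueness of solutions finishes the proof.
-/

/-- Solution of the initial value problem (IVP 1 in the paper): four ODEs
coupled with two algebraic constraints. -/
def IVPSol (Y Z P Q J K : ℝ → ℝ) : Prop :=
  Differentiable ℝ Y ∧ Differentiable ℝ Z ∧ Differentiable ℝ P ∧ Differentiable ℝ Q ∧
  (∀ t, Y t ∈ Set.Ioo (0 : ℝ) 1) ∧ (∀ t, Z t ∈ Set.Ioo (0 : ℝ) 1) ∧
  Y 0 = 1 / 2 ∧ Z 0 = 1 / 2 ∧ P 0 = 1 ∧ Q 0 = 1 ∧
  J 0 = Real.log 2 ∧ K 0 = Real.log 2 ∧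
  (∀ t, deriv Y t = Real.log 2 * P t * Y t * Real.log (Y t)) ∧
  (∀ t, deriv Z t = -(Real.log 2) * Q t * Z t * Real.log (Z t)) ∧
  (∀ t, deriv P t = -(Real.log 2) * (1 - J t) * P t * Q t) ∧
  (∀ t, deriv Q t = Real.log 2 * (1 - K t) * P t * Q t) ∧
  (∀ t, -1 = Y t / Real.log (Z t) * J t + Z t / Real.log (Y t) * K t) ∧
  (∀ t, 0 = (Z t * Real.log (Z t) + Y t) / (Z t * (Real.log (Z t)) ^ 2) * J t
          - (Y t * Real.log (Y t) + Z t) / (Y t * (Real.log (Y t)) ^ 2) * K t)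

open Set Real
open scoped Topology

theorem exists_lipschitzOnWith_section_of_locallyLipschitzOn {C E F T : Type*}
    [PseudoMetricSpace C] [PseudoMetricSpace E] [PseudoMetricSpace F] [TopologicalSpace T]
    {V : C × E → F} {U : Set (C × E)} (hV : LocallyLipschitzOn U V) {S : Set T} (hS : IsCompact S)
    {c : T → C} {f g : T → E} (hc : ContinuousOn c S)
    (hf : ContinuousOn f S) (hfU : ∀ t ∈ S, (c t, f t) ∈ U)
    (hg : ContinuousOn g S) (hgU : ∀ t ∈ S, (c t, g t) ∈ U) :
    ∃ (L : NNReal) (s : T → Set E), (∀ t, LipschitzOnWith L (fun x => V (c t, x)) (s t)) ∧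
      (∀ t ∈ S, f t ∈ s t) ∧ ∀ t ∈ S, g t ∈ s t := by
  let graphs : Set (C × E) := (fun t => (c t, f t)) '' S ∪ (fun t => (c t, g t)) '' S
  have hgraphs : IsCompact graphs :=
    (hS.image_of_continuousOn (hc.prodMk hf)).union (hS.image_of_continuousOn (hc.prodMk hg))
  have hgraphsU : graphs ⊆ U := union_subset (image_subset_iff.2 hfU) (image_subset_iff.2 hgU)
  obtain ⟨L, hL⟩ := (hV.mono hgraphsU).exists_lipschitzOnWith_of_compact hgraphs
  refine ⟨L, fun t => Prod.mk (c t) ⁻¹' graphs, fun t => ?_,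
    fun t ht => .inl (mem_image_of_mem _ ht), fun t ht => .inr (mem_image_of_mem _ ht)⟩
  simpa only [mul_one, Function.comp_def] using
    hL.comp (LipschitzWith.prodMk_left (c t)).lipschitzOnWith (mapsTo_preimage _ _)

theorem eqOn_of_hasDerivWithinAt_of_locallyLipschitzOn {C E : Type*} [PseudoMetricSpace C]
    [NormedAddCommGroup E] [NormedSpace ℝ E] {V : C × E → E} {U : Set (C × E)}
    (hV : LocallyLipschitzOn U V) {I : Set ℝ} [I.OrdConnected] {c : ℝ → C} {f g : ℝ → E} {t₀ : ℝ}
    (ht₀ : t₀ ∈ I) (hc : ContinuousOn c I)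
    (hf : ∀ t ∈ I, HasDerivWithinAt f (V (c t, f t)) I t) (hfU : ∀ t ∈ I, (c t, f t) ∈ U)
    (hg : ∀ t ∈ I, HasDerivWithinAt g (V (c t, g t)) I t) (hgU : ∀ t ∈ I, (c t, g t) ∈ U)
    (h₀ : f t₀ = g t₀) : EqOn f g I := by
  intro t ht
  have huIcc : uIcc t₀ t ⊆ I := OrdConnected.uIcc_subset ‹_› ht₀ ht
  have hf_cont : ContinuousOn f (uIcc t₀ t) :=
    (HasDerivWithinAt.continuousOn hf).mono huIcc
  have hg_cont : ContinuousOn g (uIcc t₀ t) :=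
    (HasDerivWithinAt.continuousOn hg).mono huIcc
  obtain ⟨L, s, hL, hfs, hgs⟩ := exists_lipschitzOnWith_section_of_locallyLipschitzOn hV
    isCompact_uIcc (hc.mono huIcc) hf_cont (fun τ hτ => hfU τ (huIcc hτ))
    hg_cont (fun τ hτ => hgU τ (huIcc hτ))
  rcases le_total t₀ t with hle | hle
  · rw [uIcc_of_le hle] at huIcc hf_cont hg_cont hfs hgs
    have hsub : Ico t₀ t ⊆ Icc t₀ t := Ico_subset_Icc_self
    have hnhds : ∀ τ ∈ Ico t₀ t, I ∈ 𝓝[≥] τ := fun τ hτ =>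
      Filter.mem_of_superset (Icc_mem_nhdsGE_of_mem hτ) huIcc
    exact ODE_solution_unique_of_mem_Icc_right (fun τ _ => hL τ)
      hf_cont (fun τ hτ => (hf τ (huIcc (hsub hτ))).mono_of_mem_nhdsWithin (hnhds τ hτ))
      (fun τ hτ => hfs τ (hsub hτ))
      hg_cont (fun τ hτ => (hg τ (huIcc (hsub hτ))).mono_of_mem_nhdsWithin (hnhds τ hτ))
      (fun τ hτ => hgs τ (hsub hτ)) h₀ (right_mem_Icc.2 hle)
  · rw [uIcc_of_ge hle] at huIcc hf_cont hg_cont hfs hgs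
    have hsub : Ioc t t₀ ⊆ Icc t t₀ := Ioc_subset_Icc_self
    have hnhds : ∀ τ ∈ Ioc t t₀, I ∈ 𝓝[≤] τ := fun τ hτ =>
      Filter.mem_of_superset (Icc_mem_nhdsLE_of_mem hτ) huIcc
    exact ODE_solution_unique_of_mem_Icc_left (fun τ _ => hL τ)
      hf_cont (fun τ hτ => (hf τ (huIcc (hsub hτ))).mono_of_mem_nhdsWithin (hnhds τ hτ))
      (fun τ hτ => hfs τ (hsub hτ))
      hg_cont (fun τ hτ => (hg τ (huIcc (hsub hτ))).mono_of_mem_nhdsWithin (hnhds τ hτ))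
      (fun τ hτ => hgs τ (hsub hτ)) h₀ (left_mem_Icc.2 hle)

/-- The four differential equations of `IVPSol` together with its first algebraic constraint, the
latter cleared of denominators. Initial values are prescribed separately. -/
structure TransportSystem (Y Z P Q J K : ℝ → ℝ) : Prop where
  Y_mem : ∀ t, Y t ∈ Ioo (0 : ℝ) 1
  Z_mem : ∀ t, Z t ∈ Ioo (0 : ℝ) 1
  hasDerivAt_Y : ∀ t, HasDerivAt Y (log 2 * P t * Y t * log (Y t)) t
  hasDerivAt_Z : ∀ t, HasDerivAt Z (-log 2 * Q t * Z t * log (Z t)) t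
  hasDerivAt_P : ∀ t, HasDerivAt P (-log 2 * (1 - J t) * P t * Q t) t
  hasDerivAt_Q : ∀ t, HasDerivAt Q (log 2 * (1 - K t) * P t * Q t) t
  constraint : ∀ t, J t * (Y t * log (Y t)) + K t * (Z t * log (Z t)) = -(log (Y t) * log (Z t))

theorem IVPSol.transportSystem {Y Z P Q J K : ℝ → ℝ} (h : IVPSol Y Z P Q J K) :
    TransportSystem Y Z P Q J K := by
  obtain ⟨dY, dZ, dP, dQ, hY, hZ, -, -, -, -, -, -, eY, eZ, eP, eQ, hJK, -⟩ := h
  refine ⟨hY, hZ, fun t => eY t ▸ (dY t).hasDerivAt, fun t => eZ t ▸ (dZ t).hasDerivAt,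
    fun t => eP t ▸ (dP t).hasDerivAt, fun t => eQ t ▸ (dQ t).hasDerivAt, fun t => ?_⟩
  have hlogY : log (Y t) ≠ 0 := (log_neg (hY t).1 (hY t).2).ne
  have hlogZ : log (Z t) ≠ 0 := (log_neg (hZ t).1 (hZ t).2).ne
  have hJKt := hJK t
  field_simp at hJKt
  linarith

namespace TransportSystem

/-- The quantity `F = Y + Z - 1`, which vanishes along the solutions of interest. -/
noncomputable def defect (Y Z : ℝ → ℝ) (t : ℝ) : ℝ := Y t + Z t - 1

/-- The quantity `G = P Y ln Y - Q Z ln Z`, which is the velocity of `defect` up to the factor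
`ln 2`. -/
noncomputable def imbalance (Y Z P Q : ℝ → ℝ) (t : ℝ) : ℝ :=
  P t * (Y t * log (Y t)) - Q t * (Z t * log (Z t))

variable {Y Z P Q J K : ℝ → ℝ} (h : TransportSystem Y Z P Q J K)
include h

theorem hasDerivAt_defect (t : ℝ) :
    HasDerivAt (defect Y Z) (log 2 * imbalance Y Z P Q t) t := by
  refine (((h.hasDerivAt_Y t).add (h.hasDerivAt_Z t)).sub_const 1).congr_deriv ?_
  rw [imbalance]
  ring

theorem hasDerivAt_imbalance (t : ℝ) :
    HasDerivAt (imbalance Y Z P Q)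
      (log 2 * ((P t * (log (Y t) + 1) - Q t * (log (Z t) + 1)) * imbalance Y Z P Q t
        + P t * Q t * (log (Y t) * log (Z t)) * defect Y Z t)) t := by
  have hYlogY := (hasDerivAt_mul_log (h.Y_mem t).1.ne').comp t (h.hasDerivAt_Y t)
  have hZlogZ := (hasDerivAt_mul_log (h.Z_mem t).1.ne').comp t (h.hasDerivAt_Z t)
  refine (((h.hasDerivAt_P t).mul hYlogY).sub ((h.hasDerivAt_Q t).mul hZlogZ)).congr_deriv ?_
  simp only [imbalance, defect, Function.comp_apply]
  linear_combination (log 2 * P t * Q t) * h.constraint t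

theorem continuous_Y : Continuous Y :=
  continuous_iff_continuousAt.2 fun t => (h.hasDerivAt_Y t).continuousAt

theorem continuous_Z : Continuous Z :=
  continuous_iff_continuousAt.2 fun t => (h.hasDerivAt_Z t).continuousAt

theorem continuous_P : Continuous P :=
  continuous_iff_continuousAt.2 fun t => (h.hasDerivAt_P t).continuousAt

theorem continuous_Q : Continuous Q :=
  continuous_iff_continuousAt.2 fun t => (h.hasDerivAt_Q t).continuousAt

theorem defect_eq_zero_and_imbalance_eq_zero {t₀ : ℝ} (hF : defect Y Z t₀ = 0)
    (hG : imbalance Y Z P Q t₀ = 0) (t : ℝ) : defect Y Z t = 0 ∧ imbalance Y Z P Q t = 0 := by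
  have hlogY : Continuous fun t => log (Y t) := h.continuous_Y.log fun t => (h.Y_mem t).1.ne'
  have hlogZ : Continuous fun t => log (Z t) := h.continuous_Z.log fun t => (h.Z_mem t).1.ne'
  have hP := h.continuous_P
  have hQ := h.continuous_Q
  let coeffs : ℝ → ℝ × ℝ := fun t =>
    (P t * (log (Y t) + 1) - Q t * (log (Z t) + 1), P t * Q t * (log (Y t) * log (Z t)))
  let V : (ℝ × ℝ) × ℝ × ℝ → ℝ × ℝ := fun x =>
    (log 2 * x.2.2, log 2 * (x.1.1 * x.2.2 + x.1.2 * x.2.1))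
  have hV : ContDiff ℝ 1 V := by fun_prop
  have hzero : EqOn (fun t => (defect Y Z t, imbalance Y Z P Q t)) (fun _ => 0) univ :=
    eqOn_of_hasDerivWithinAt_of_locallyLipschitzOn (c := coeffs) (t₀ := t₀)
      hV.locallyLipschitz.locallyLipschitzOn (mem_univ t₀) (by fun_prop)
      (fun t _ => ((h.hasDerivAt_defect t).prodMk (h.hasDerivAt_imbalance t)).hasDerivWithinAt)
      (fun _ _ => mem_univ _)
      (fun t _ => (hasDerivWithinAt_const t univ (0 : ℝ × ℝ)).congr_deriv
        (by simp [V, Prod.mk_zero_zero]))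
      (fun _ _ => mem_univ _) (Prod.ext hF hG)
  exact Prod.ext_iff.1 (hzero (mem_univ t))

theorem add_eq_one {t₀ : ℝ} (hsum : Y t₀ + Z t₀ = 1)
    (hbal : P t₀ * (Y t₀ * log (Y t₀)) = Q t₀ * (Z t₀ * log (Z t₀))) (t : ℝ) : Y t + Z t = 1 :=
  sub_eq_zero.1
    (h.defect_eq_zero_and_imbalance_eq_zero (sub_eq_zero.2 hsum) (sub_eq_zero.2 hbal) t).1

theorem mul_mul_log_eq {t₀ : ℝ} (hsum : Y t₀ + Z t₀ = 1)
    (hbal : P t₀ * (Y t₀ * log (Y t₀)) = Q t₀ * (Z t₀ * log (Z t₀))) (t : ℝ) :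
    P t * (Y t * log (Y t)) = Q t * (Z t * log (Z t)) :=
  sub_eq_zero.1
    (h.defect_eq_zero_and_imbalance_eq_zero (sub_eq_zero.2 hsum) (sub_eq_zero.2 hbal) t).2

end TransportSystem

/-- The velocity of a point `x ∈ (0, 1)` moved by the infinitesimal squaring maps
`x ↦ x ^ (2 ^ du)` and `x ↦ 1 - (1 - x) ^ (2 ^ dv)` at rates `p` and `q`. The argument is
`((p, q), x)`; in the theorem `p = P u'` and `q = Q v'`. -/
noncomputable def squaringField (w : (ℝ × ℝ) × ℝ) : ℝ :=
  log 2 * (w.1.1 * (w.2 * log w.2) - w.1.2 * ((1 - w.2) * log (1 - w.2)))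

theorem locallyLipschitzOn_squaringField :
    LocallyLipschitzOn (univ ×ˢ Ioo 0 1) squaringField := by
  refine ContDiffOn.locallyLipschitzOn (convex_univ.prod (convex_Ioo 0 1)) ?_
  have hlog : ContDiffOn ℝ 1 (fun w : (ℝ × ℝ) × ℝ => log w.2) (univ ×ˢ Ioo 0 1) :=
    contDiff_snd.contDiffOn.log fun w hw => hw.2.1.ne'
  have hlog_sub : ContDiffOn ℝ 1 (fun w : (ℝ × ℝ) × ℝ => log (1 - w.2)) (univ ×ˢ Ioo 0 1) :=
    (contDiff_const.sub contDiff_snd).contDiffOn.log fun w hw => (sub_pos.2 hw.2.2).ne'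
  unfold squaringField
  fun_prop

namespace TransportSystem

variable {Y Z P Q J K : ℝ → ℝ}

theorem hasDerivWithinAt_comp_sub (h : TransportSystem Y Z P Q J K) {t₀ : ℝ}
    (hsum : Y t₀ + Z t₀ = 1)
    (hbal : P t₀ * (Y t₀ * log (Y t₀)) = Q t₀ * (Z t₀ * log (Z t₀)))
    {u v : ℝ → ℝ} {u' v' s : ℝ} {I : Set ℝ}
    (hu : HasDerivWithinAt u u' I s) (hv : HasDerivWithinAt v v' I s) :
    HasDerivWithinAt (fun s => Y (u s - v s))
      (squaringField ((P (u s - v s) * u', Q (u s - v s) * v'), Y (u s - v s))) I s := by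
  refine ((h.hasDerivAt_Y (u s - v s)).comp_hasDerivWithinAt s (hu.sub hv)).congr_deriv ?_
  have hZ : 1 - Y (u s - v s) = Z (u s - v s) :=
    sub_eq_of_eq_add' (h.add_eq_one hsum hbal _).symm
  have hPQ := h.mul_mul_log_eq hsum hbal (u s - v s)
  simp only [squaringField, hZ]
  linear_combination -(log 2 * v') * hPQ

end TransportSystem

theorem stmt_16_general {Y Z P Q J K : ℝ → ℝ} (h : TransportSystem Y Z P Q J K) {t₀ : ℝ}
    (hsum : Y t₀ + Z t₀ = 1)
    (hbal : P t₀ * (Y t₀ * log (Y t₀)) = Q t₀ * (Z t₀ * log (Z t₀)))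
    {I : Set ℝ} [I.OrdConnected] (hI : UniqueDiffOn ℝ I) {s₀ : ℝ} (hs₀ : s₀ ∈ I)
    {u v X : ℝ → ℝ} (hu : ContDiffOn ℝ 1 u I) (hv : ContDiffOn ℝ 1 v I)
    (hX : DifferentiableOn ℝ X I) (hX01 : ∀ s ∈ I, X s ∈ Ioo (0 : ℝ) 1)
    (hX0 : X s₀ = Y (u s₀ - v s₀))
    (hODE : ∀ s ∈ I, derivWithin X I s =
      log 2 * P (u s - v s) * X s * log (X s) * derivWithin u I s
        - log 2 * Q (u s - v s) * (1 - X s) * log (1 - X s) * derivWithin v I s) :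
    EqOn X (fun s => Y (u s - v s)) I := by
  have hu' := hu.continuousOn_derivWithin hI le_rfl
  have hv' := hv.continuousOn_derivWithin hI le_rfl
  have huv : ContinuousOn (fun s => u s - v s) I := hu.continuousOn.sub hv.continuousOn
  refine eqOn_of_hasDerivWithinAt_of_locallyLipschitzOn locallyLipschitzOn_squaringField
    (c := fun s => (P (u s - v s) * derivWithin u I s, Q (u s - v s) * derivWithin v I s)) hs₀
    (((h.continuous_P.comp_continuousOn huv).mul hu').prodMk
      ((h.continuous_Q.comp_continuousOn huv).mul hv'))
    (fun s hs => (hX s hs).hasDerivWithinAt.congr_deriv ?_)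
    (fun s hs => ⟨mem_univ _, hX01 s hs⟩)
    (fun s hs => h.hasDerivWithinAt_comp_sub hsum hbal
      (hu.differentiableOn one_ne_zero s hs).hasDerivWithinAt
      (hv.differentiableOn one_ne_zero s hs).hasDerivWithinAt)
    (fun s _ => ⟨mem_univ _, h.Y_mem _⟩) hX0
  rw [hODE s hs, squaringField]
  ring

/-- The value transported along a piecewise smooth path travels together
with `Y`: if `X` evolves along the path `(u, v)` by the infinitesimal
squaring maps and starts at `Y(u(0) − v(0))`, then `X(S) = Y(u(S) − v(S))`. -/
theorem stmt_16 (Y Z P Q J K : ℝ → ℝ) (h : IVPSol Y Z P Q J K)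
    (S : ℝ) (hS : 0 < S) (u v X : ℝ → ℝ)
    (hu : ContDiffOn ℝ 1 u (Set.Icc 0 S)) (hv : ContDiffOn ℝ 1 v (Set.Icc 0 S))
    (hX : DifferentiableOn ℝ X (Set.Icc 0 S))
    (hX01 : ∀ s ∈ Set.Icc (0 : ℝ) S, X s ∈ Set.Ioo (0 : ℝ) 1)
    (hX0 : X 0 = Y (u 0 - v 0))
    (hODE : ∀ s ∈ Set.Icc (0 : ℝ) S,
      derivWithin X (Set.Icc 0 S) s =
        Real.log 2 * P (u s - v s) * X s * Real.log (X s)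
          * derivWithin u (Set.Icc 0 S) s
        - Real.log 2 * Q (u s - v s) * (1 - X s) * Real.log (1 - X s)
          * derivWithin v (Set.Icc 0 S) s) :
    X S = Y (u S - v S) := by
  have ⟨_, _, _, _, _, _, hY0, hZ0, hP0, hQ0, _⟩ := h
  exact stmt_16_general h.transportSystem (t₀ := 0) (by norm_num [hY0, hZ0])
    (by rw [hY0, hZ0, hP0, hQ0]) (uniqueDiffOn_Icc hS) (left_mem_Icc.2 hS.le) hu hv
    hX hX01 hX0 hODE (right_mem_Icc.2 hS.le)
end

section
/- Let m be a positive real number and set M := 2^m + log₂(ln 2). Then for every x ∈ [0,1], one has 1 − (1 − x^(2^m))^(2^M) ≥ (1 − (1 − x)^(2^m))^(2^M). -/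
/-!
Put `a = 2 ^ m`, `A = 2 ^ M`, and let `gap x = 1 - (1 - x ^ a) ^ A - (1 - (1 - x) ^ a) ^ A`, which
is symmetric about `1 / 2` and vanishes at `0`. For all positive `a` and `A`, it is nonnegative on
`[0, 1]` as soon as it is nonnegative at `1 / 2`, and `1 - t ≤ exp (-t)` gives the latter when
`A ≥ 2 ^ a * log 2`.

If `a ≤ 1 ≤ A`, then `(1 - x ^ a) ^ A ≤ 1 - x` suffices, and `A < 1 ≤ a` is incompatible with
`gap (1 / 2) ≥ 0`. In the remaining cases `(A - 1) * (a - 1) ≥ 0`. With `ℓ` the logarithm of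
`x ^ (a - 1) * (1 - x ^ a) ^ (A - 1)`, the sign of `gap'` is that of `R x = ℓ x - ℓ (1 - x)`, and
`x * (1 - x) * R' x = (a - 1) - (A - 1) * a * (k x + k (1 - x) - 1)` for
`k x = (1 - x) / (1 - x ^ a)`. Since `(A - 1) * k` is convex, `R'` changes sign at most once on
`(0, 1 / 2)`, from negative to positive. At an interior minimum `c < 1 / 2` of `gap` one has
`R c = 0 = R (1 / 2)`, so `R ≤ 0` on `[c, 1 / 2]` and `gap c ≥ gap (1 / 2) ≥ 0`.
-/

open Real Set

namespace PowerGap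

theorem convexOn_add_le_of_mem_segment {E : Type*} [AddCommGroup E] [Module ℝ E] {s : Set E}
    {f : E → ℝ} (hf : ConvexOn ℝ s f) {x y z : E} (hx : x ∈ s) (hz : z ∈ s)
    (hy : y ∈ segment ℝ x z) : f y + f (x + z - y) ≤ f x + f z := by
  obtain ⟨p, q, hp, hq, hpq, rfl⟩ := hy
  have hswap : x + z - (p • x + q • z) = q • x + p • z := by
    linear_combination (norm := module) -(hpq • (x + z))
  have h₁ := hf.2 hx hz hp hq hpq
  have h₂ := hf.2 hx hz hq hp (by rwa [add_comm])
  simp only [smul_eq_mul] at h₁ h₂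
  rw [hswap]
  linear_combination h₁ + h₂ + (f x + f z) * hpq

theorem le_max_of_hasDerivAt_of_single_crossing {f f' : ℝ → ℝ} {p q z : ℝ}
    (hf : ContinuousOn f (Icc p q)) (hf' : ∀ x ∈ Ioo p q, HasDerivAt f (f' x) x)
    (hcross : ∀ u ∈ Ioo p q, ∀ v ∈ Ioo p q, u < v → 0 < f' u → 0 ≤ f' v)
    (hz : z ∈ Icc p q) : f z ≤ max (f p) (f q) := by
  by_contra! hlt
  obtain ⟨hp, hq⟩ := max_lt_iff.mp hlt
  have hpz : p < z := hz.1.lt_of_ne fun h => hp.ne (congrArg f h)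
  have hzq : z < q := hz.2.lt_of_ne fun h => hq.ne' (congrArg f h)
  obtain ⟨u, hu, hu'⟩ := exists_hasDerivAt_eq_slope f f' hpz
    (hf.mono (Icc_subset_Icc_right hz.2)) fun x hx => hf' x ⟨hx.1, hx.2.trans hzq⟩
  obtain ⟨v, hv, hv'⟩ := exists_hasDerivAt_eq_slope f f' hzq
    (hf.mono (Icc_subset_Icc_left hz.1)) fun x hx => hf' x ⟨hpz.trans hx.1, hx.2⟩
  have hu_pos : 0 < f' u := hu' ▸ div_pos (sub_pos.mpr hp) (sub_pos.mpr hpz)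
  have hv_neg : f' v < 0 := hv' ▸ div_neg_of_neg_of_pos (sub_neg.mpr hq) (sub_pos.mpr hzq)
  exact hv_neg.not_ge <| hcross u ⟨hu.1, hu.2.trans hzq⟩ v ⟨hpz.trans hv.1, hv.2⟩
    (hu.2.trans hv.1) hu_pos

variable {a A c x y : ℝ}

theorem mul_rpow_one_add_sub_nonneg {s : ℝ} (hs : -1 ≤ s) (ha : 0 ≤ a) (hc : 0 ≤ c * (a - 1)) :
    0 ≤ c * ((1 + s) ^ a - (1 + a * s)) := by
  rcases lt_trichotomy a 1 with ha1 | rfl | ha1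
  · exact mul_nonneg_of_nonpos_of_nonpos (nonpos_of_mul_nonneg_left hc (sub_neg.mpr ha1))
      (sub_nonpos.mpr (rpow_one_add_le_one_add_mul_self hs ha ha1.le))
  · simp
  · exact mul_nonneg (nonneg_of_mul_nonneg_left hc (sub_pos.mpr ha1))
      (sub_nonneg.mpr (one_add_mul_self_le_rpow_one_add hs ha1.le))

theorem mul_one_add_sub_mul_rpow_nonneg (hx : 0 < x) (ha : 0 ≤ a) (hc : 0 ≤ c * (a - 1)) :
    0 ≤ c * (1 + (a - 1) * x ^ a - a * x ^ (a - 1)) := by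
  have hbernoulli : 0 ≤ c * ((1 + (x⁻¹ - 1)) ^ a - (1 + a * (x⁻¹ - 1))) :=
    mul_rpow_one_add_sub_nonneg (by linarith [inv_pos.mpr hx]) ha hc
  have hxa : 0 < x ^ a := rpow_pos_of_pos hx a
  refine (mul_nonneg hxa.le hbernoulli).trans_eq ?_
  rw [add_sub_cancel, inv_rpow hx.le, rpow_sub_one hx.ne']
  field_simp
  ring

/-- Up to a positive factor, the second derivative of `x ↦ (1 - x) / (1 - x ^ a)` on `(0, 1)`. -/
noncomputable def convexityNumerator (a x : ℝ) : ℝ :=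
  (a - 1) - (a + 1) * x + (a + 1) * x ^ a - (a - 1) * x ^ (a + 1)

theorem hasDerivAt_convexityNumerator (hx : 0 < x) :
    HasDerivAt (convexityNumerator a)
      (-((a + 1) * (1 + (a - 1) * x ^ a - a * x ^ (a - 1)))) x := by
  have hpow := hasDerivAt_rpow_const (x := x) (p := a) (Or.inl hx.ne')
  have hpow' := hasDerivAt_rpow_const (x := x) (p := a + 1) (Or.inl hx.ne')
  refine (((((hasDerivAt_id x).const_mul (a + 1)).const_sub (a - 1)).add
    (hpow.const_mul (a + 1))).sub (hpow'.const_mul (a - 1))).congr_deriv ?_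
  rw [add_sub_cancel_right]
  ring

theorem mul_convexityNumerator_nonneg (ha : 0 ≤ a) (hc : 0 ≤ c * (a - 1))
    (hx : x ∈ Ioc (0 : ℝ) 1) : 0 ≤ c * convexityNumerator a x := by
  have hderiv (y : ℝ) (hy : 0 < y) :=
    (hasDerivAt_convexityNumerator (a := a) hy).const_mul c
  have hanti : AntitoneOn (fun y => c * convexityNumerator a y) (Ioc 0 1) := by
    refine antitoneOn_of_hasDerivWithinAt_nonpos (convex_Ioc 0 1)
      (fun y hy => (hderiv y hy.1).continuousAt.continuousWithinAt)
      (fun y hy => (hderiv y (interior_subset hy).1).hasDerivWithinAt) fun y hy => ?_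
    have hy := (interior_subset hy).1
    have := mul_nonneg (by linarith : 0 ≤ a + 1) (mul_one_add_sub_mul_rpow_nonneg hy ha hc)
    linear_combination this
  have hone : c * convexityNumerator a 1 = 0 := by simp [convexityNumerator]
  exact hone.symm.trans_le (hanti hx ⟨one_pos, le_rfl⟩ hx.2)

theorem one_sub_rpow_pos (ha : 0 < a) (hx : x ∈ Ioo (0 : ℝ) 1) : 0 < 1 - x ^ a :=
  sub_pos.mpr (rpow_lt_one hx.1.le hx.2 ha)

/-- The reciprocal of the slope of the chord of `t ↦ t ^ a` between `x` and `1`. -/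
noncomputable def invSlope (a x : ℝ) : ℝ := (1 - x) / (1 - x ^ a)

/-- The derivative of `invSlope a` on `(0, 1)`. -/
noncomputable def invSlopeDeriv (a x : ℝ) : ℝ :=
  ((1 - x) * (a * x ^ (a - 1)) - (1 - x ^ a)) / (1 - x ^ a) ^ 2

theorem hasDerivAt_invSlope (ha : 0 < a) (hx : x ∈ Ioo (0 : ℝ) 1) :
    HasDerivAt (invSlope a) (invSlopeDeriv a x) x := by
  have hpow := hasDerivAt_rpow_const (x := x) (p := a) (Or.inl hx.1.ne')
  refine (((hasDerivAt_id x).const_sub 1).div (hpow.const_sub 1)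
    (one_sub_rpow_pos ha hx).ne').congr_deriv ?_
  rw [invSlopeDeriv, id]
  ring

theorem hasDerivAt_invSlopeDeriv (ha : 0 < a) (hx : x ∈ Ioo (0 : ℝ) 1) :
    HasDerivAt (invSlopeDeriv a)
      (a * x ^ (a - 2) / (1 - x ^ a) ^ 3 * convexityNumerator a x) x := by
  have hne := (one_sub_rpow_pos ha hx).ne'
  have hpow := hasDerivAt_rpow_const (x := x) (p := a) (Or.inl hx.1.ne')
  have hpow' := hasDerivAt_rpow_const (x := x) (p := a - 1) (Or.inl hx.1.ne')
  refine (((((hasDerivAt_id x).const_sub 1).mul (hpow'.const_mul a)).sub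
    (hpow.const_sub 1)).div ((hpow.const_sub 1).pow 2) (pow_ne_zero 2 hne)).congr_deriv ?_
  have hx0 := hx.1.ne'
  simp only [id, Pi.sub_apply, Pi.mul_apply, Pi.pow_apply, convexityNumerator]
  rw [show a - 2 = a - 1 - 1 by ring, rpow_add_one hx0, rpow_sub_one hx0 (a - 1),
    rpow_sub_one hx0]
  generalize x ^ a = t at hne ⊢
  field_simp
  ring

theorem convexOn_mul_invSlope (ha : 0 < a) (hc : 0 ≤ c * (a - 1)) :
    ConvexOn ℝ (Ioo 0 1) fun x => c * invSlope a x := by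
  refine convexOn_of_hasDerivWithinAt2_nonneg (convex_Ioo 0 1)
    (fun x hx => ((hasDerivAt_invSlope ha hx).const_mul c).continuousAt.continuousWithinAt)
    (fun x hx =>
      ((hasDerivAt_invSlope ha (interior_subset hx)).const_mul c).hasDerivWithinAt)
    (fun x hx =>
      ((hasDerivAt_invSlopeDeriv ha (interior_subset hx)).const_mul c).hasDerivWithinAt)
    fun x hx => ?_
  have hx := interior_subset hx
  rw [mul_left_comm]
  have hfactor : 0 ≤ a * x ^ (a - 2) / (1 - x ^ a) ^ 3 :=
    div_nonneg (mul_nonneg ha.le (rpow_nonneg hx.1.le _))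
      (pow_nonneg (one_sub_rpow_pos ha hx).le 3)
  exact mul_nonneg hfactor (mul_convexityNumerator_nonneg ha.le hc ⟨hx.1, hx.2.le⟩)

theorem mul_invSlope_add_reflect_le (ha : 0 < a) (hc : 0 ≤ c * (a - 1)) (hx : 0 < x)
    (hxy : x ≤ y) (hy : y ≤ 1 / 2) :
    c * (invSlope a y + invSlope a (1 - y)) ≤ c * (invSlope a x + invSlope a (1 - x)) := by
  have hx' : x ∈ Ioo (0 : ℝ) 1 := ⟨hx, by linarith⟩
  have hy' : y ∈ segment ℝ x (1 - x) := by
    rw [segment_eq_Icc (by linarith)]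
    exact ⟨hxy, by linarith⟩
  have h := convexOn_add_le_of_mem_segment (convexOn_mul_invSlope ha hc) hx'
    (Ioo.one_sub_mem hx') hy'
  simpa only [add_sub_cancel, ← mul_add] using h

/-- The logarithm of `x ^ (a - 1) * (1 - x ^ a) ^ (A - 1)` on `(0, 1)`; up to the factor `-a * A`,
this product is the derivative of `x ↦ (1 - x ^ a) ^ A`. -/
noncomputable def logWeight (a A x : ℝ) : ℝ := (a - 1) * log x + (A - 1) * log (1 - x ^ a)

theorem exp_logWeight (ha : 0 < a) (hx : x ∈ Ioo (0 : ℝ) 1) :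
    exp (logWeight a A x) = x ^ (a - 1) * (1 - x ^ a) ^ (A - 1) := by
  rw [logWeight, exp_add, rpow_def_of_pos hx.1 (a - 1),
    rpow_def_of_pos (one_sub_rpow_pos ha hx), mul_comm (a - 1), mul_comm (A - 1)]

theorem hasDerivAt_logWeight (ha : 0 < a) (hx : x ∈ Ioo (0 : ℝ) 1) :
    HasDerivAt (logWeight a A)
      ((a - 1) / x - (A - 1) * (a * x ^ (a - 1) / (1 - x ^ a))) x := by
  have hpow := hasDerivAt_rpow_const (x := x) (p := a) (Or.inl hx.1.ne')
  refine (((hasDerivAt_log hx.1.ne').const_mul (a - 1)).add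
    (((hpow.const_sub 1).log (one_sub_rpow_pos ha hx).ne').const_mul (A - 1))).congr_deriv ?_
  ring

/-- The antisymmetrization of `logWeight` about `1 / 2`, which has the sign of the derivative of
`gap`. -/
noncomputable def logWeightDiff (a A x : ℝ) : ℝ := logWeight a A x - logWeight a A (1 - x)

theorem logWeightDiff_half : logWeightDiff a A (1 / 2) = 0 := by norm_num [logWeightDiff]

theorem hasDerivAt_logWeightDiff (ha : 0 < a) (hx : x ∈ Ioo (0 : ℝ) 1) :
    HasDerivAt (logWeightDiff a A)
      (((a - 1) - (A - 1) * a * (invSlope a x + invSlope a (1 - x) - 1)) / (x * (1 - x))) x := by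
  have hx' := Ioo.one_sub_mem hx
  refine ((hasDerivAt_logWeight ha hx).sub ((hasDerivAt_logWeight ha hx').comp x
    ((hasDerivAt_id x).const_sub 1))).congr_deriv ?_
  have hne := (one_sub_rpow_pos ha hx).ne'
  have hne' := (one_sub_rpow_pos ha hx').ne'
  have hx0 := hx.1.ne'
  have hx0' := hx'.1.ne'
  rw [invSlope, invSlope, rpow_sub_one hx0, rpow_sub_one hx0', sub_sub_cancel]
  generalize x ^ a = s at hne ⊢
  generalize (1 - x) ^ a = t at hne' ⊢
  field_simp
  ring

theorem logWeightDiff_nonpos (ha : 0 < a) (haA : 0 ≤ (A - 1) * (a - 1)) (hc : 0 < c)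
    (hc_zero : logWeightDiff a A c = 0) (hx : x ∈ Icc c (1 / 2)) : logWeightDiff a A x ≤ 0 := by
  have hderiv (y : ℝ) (hy : y ∈ Icc c (1 / 2)) :=
    hasDerivAt_logWeightDiff (A := A) ha (x := y) ⟨hc.trans_le hy.1, by linarith [hy.2]⟩
  have hle := le_max_of_hasDerivAt_of_single_crossing
    (fun y hy => (hderiv y hy).continuousAt.continuousWithinAt)
    (fun y hy => hderiv y (Ioo_subset_Icc_self hy)) ?_ hx
  · rwa [hc_zero, logWeightDiff_half, max_self] at hle
  intro u hu v hv huv hu_pos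
  have hu0 : 0 < u := hc.trans hu.1
  have hu_den : 0 < u * (1 - u) := mul_pos hu0 (by linarith [hu.2])
  have hv_den : 0 < v * (1 - v) := mul_pos (hu0.trans huv) (by linarith [hv.2])
  have hu_num := (div_pos_iff_of_pos_right hu_den).mp hu_pos
  have hsum := mul_invSlope_add_reflect_le ha haA hu0 huv.le hv.2.le
  refine div_nonneg ?_ hv_den.le
  linear_combination hu_num + a * hsum

/-- The amount by which `x ↦ (1 - x ^ a) ^ A` and its reflection about `1 / 2` together fall short
of `1`. -/
noncomputable def gap (a A x : ℝ) : ℝ := 1 - (1 - x ^ a) ^ A - (1 - (1 - x) ^ a) ^ A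

theorem gap_one_sub : gap a A (1 - x) = gap a A x := by
  rw [gap, gap, sub_sub_cancel]
  ring

theorem gap_zero (ha : a ≠ 0) (hA : A ≠ 0) : gap a A 0 = 0 := by simp [gap, ha, hA]

theorem gap_half : gap a A (1 / 2) = 1 - 2 * (1 - (1 / 2) ^ a) ^ A := by
  rw [gap, sub_half]
  ring

theorem continuous_gap (ha : 0 ≤ a) (hA : 0 ≤ A) : Continuous (gap a A) := by
  have hpow : Continuous fun x : ℝ => (1 - x ^ a) ^ A :=
    (continuous_const.sub (continuous_id.rpow_const fun _ => Or.inr ha)).rpow_const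
      fun _ => Or.inr hA
  exact (continuous_const.sub hpow).sub (hpow.comp (continuous_const.sub continuous_id))

theorem hasDerivAt_one_sub_rpow_rpow (ha : 0 < a) (hx : x ∈ Ioo (0 : ℝ) 1) :
    HasDerivAt (fun x : ℝ => (1 - x ^ a) ^ A) (-(A * a * exp (logWeight a A x))) x := by
  have hpow := hasDerivAt_rpow_const (x := x) (p := a) (Or.inl hx.1.ne')
  refine ((hpow.const_sub 1).rpow_const (Or.inl (one_sub_rpow_pos ha hx).ne')).congr_deriv ?_
  rw [exp_logWeight ha hx]
  ring

theorem hasDerivAt_gap (ha : 0 < a) (hx : x ∈ Ioo (0 : ℝ) 1) :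
    HasDerivAt (gap a A) (A * a * (exp (logWeight a A x) - exp (logWeight a A (1 - x)))) x := by
  refine (((hasDerivAt_one_sub_rpow_rpow ha hx).const_sub 1).sub
    ((hasDerivAt_one_sub_rpow_rpow ha (Ioo.one_sub_mem hx)).comp x
      ((hasDerivAt_id x).const_sub 1))).congr_deriv ?_
  ring

theorem gap_half_le_gap_of_logWeightDiff_eq_zero (ha : 0 < a) (hA : 0 ≤ A)
    (haA : 0 ≤ (A - 1) * (a - 1)) (hc : c ∈ Ioc (0 : ℝ) (1 / 2))
    (hc_zero : logWeightDiff a A c = 0) : gap a A (1 / 2) ≤ gap a A c := by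
  have hanti : AntitoneOn (gap a A) (Icc c (1 / 2)) := by
    refine antitoneOn_of_hasDerivWithinAt_nonpos (convex_Icc _ _)
      (continuous_gap ha.le hA).continuousOn
      (fun y hy => (hasDerivAt_gap ha ?_).hasDerivWithinAt) fun y hy => ?_
    · have hy := interior_subset hy
      exact ⟨hc.1.trans_le hy.1, by linarith [hy.2]⟩
    · have hdiff := logWeightDiff_nonpos ha haA hc.1 hc_zero (interior_subset hy)
      exact mul_nonpos_of_nonneg_of_nonpos (mul_nonneg hA ha.le)
        (sub_nonpos.mpr (exp_le_exp.mpr (sub_nonpos.mp hdiff)))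
  exact hanti ⟨le_rfl, hc.2⟩ ⟨hc.2, le_rfl⟩ hc.2

theorem min_zero_gap_half_le_gap (ha : 0 < a) (hA : 0 < A) (haA : 0 ≤ (A - 1) * (a - 1))
    (hx : x ∈ Icc (0 : ℝ) (1 / 2)) : min 0 (gap a A (1 / 2)) ≤ gap a A x := by
  obtain ⟨c, hc, hmin⟩ := isCompact_Icc.exists_isMinOn ⟨x, hx⟩
    (continuous_gap ha.le hA.le).continuousOn
  refine le_trans ?_ (hmin hx)
  rcases hc.1.eq_or_lt with rfl | hc0
  · exact (min_le_left _ _).trans_eq (gap_zero ha.ne' hA.ne').symm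
  rcases hc.2.eq_or_lt with rfl | hc_half
  · exact min_le_right _ _
  have hcrit := (hmin.isLocalMin (Icc_mem_nhds hc0 hc_half)).hasDerivAt_eq_zero
    (hasDerivAt_gap ha ⟨hc0, by linarith⟩)
  have hexp := (mul_eq_zero.mp hcrit).resolve_left (mul_pos hA ha).ne'
  have hdiff : logWeightDiff a A c = 0 := sub_eq_zero.mpr (exp_injective (sub_eq_zero.mp hexp))
  exact (min_le_right _ _).trans
    (gap_half_le_gap_of_logWeightDiff_eq_zero ha hA.le haA ⟨hc0, hc_half.le⟩ hdiff)

theorem one_sub_rpow_rpow_le_one_sub (ha : 0 ≤ a) (ha1 : a ≤ 1) (hA : 1 ≤ A)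
    (hx : x ∈ Icc (0 : ℝ) 1) : (1 - x ^ a) ^ A ≤ 1 - x := by
  have hpow_le : x ^ a ≤ 1 := rpow_le_one hx.1 hx.2 ha
  have hle_pow : x ≤ x ^ a := self_le_rpow_of_le_one hx.1 hx.2 ha1
  calc (1 - x ^ a) ^ A ≤ 1 - x ^ a :=
        rpow_le_self_of_le_one (sub_nonneg.mpr hpow_le)
          (sub_le_self 1 (rpow_nonneg hx.1 a)) hA
    _ ≤ 1 - x := sub_le_sub_left hle_pow 1

theorem gap_nonneg_of_le_one_of_one_le (ha : 0 ≤ a) (ha1 : a ≤ 1) (hA : 1 ≤ A)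
    (hx : x ∈ Icc (0 : ℝ) 1) : 0 ≤ gap a A x := by
  have hle := one_sub_rpow_rpow_le_one_sub ha ha1 hA hx
  have hle' := one_sub_rpow_rpow_le_one_sub ha ha1 hA (Icc.one_sub_mem hx)
  rw [gap]
  linarith

theorem lt_one_of_gap_half_nonneg (ha : 0 < a) (hA : A < 1) (hhalf : 0 ≤ gap a A (1 / 2)) :
    a < 1 := by
  have hbase : 0 < 1 - (1 / 2 : ℝ) ^ a := one_sub_rpow_pos ha ⟨by norm_num, by norm_num⟩
  have hlt : 1 - (1 / 2 : ℝ) ^ a < (1 - (1 / 2) ^ a) ^ A :=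
    self_lt_rpow_of_lt_one hbase (sub_lt_self 1 (rpow_pos_of_pos one_half_pos a)) hA
  rw [gap_half] at hhalf
  have hpow : (1 / 2 : ℝ) ^ (1 : ℝ) < (1 / 2) ^ a := by
    rw [rpow_one]
    linarith
  exact (rpow_lt_rpow_left_iff_of_base_lt_one one_half_pos one_half_lt_one).mp hpow

theorem gap_nonneg_of_gap_half_nonneg (ha : 0 < a) (hA : 0 < A) (hhalf : 0 ≤ gap a A (1 / 2))
    (hx : x ∈ Icc (0 : ℝ) 1) : 0 ≤ gap a A x := by
  wlog hx_half : x ≤ 1 / 2 generalizing x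
  · rw [← gap_one_sub]
    exact this (Icc.one_sub_mem hx) (by linarith)
  suffices haA : a ≤ 1 ∧ 1 ≤ A ∨ 0 ≤ (A - 1) * (a - 1) by
    rcases haA with ⟨ha1, hA1⟩ | haA
    · exact gap_nonneg_of_le_one_of_one_le ha.le ha1 hA1 hx
    · exact (le_min le_rfl hhalf).trans (min_zero_gap_half_le_gap ha hA haA ⟨hx.1, hx_half⟩)
  rcases lt_or_ge A 1 with hA1 | hA1
  · have ha1 := lt_one_of_gap_half_nonneg ha hA1 hhalf
    exact Or.inr (mul_nonneg_of_nonpos_of_nonpos (by linarith) (by linarith))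
  · exact (le_total a 1).imp (⟨·, hA1⟩) fun ha1 =>
      mul_nonneg (sub_nonneg.mpr hA1) (sub_nonneg.mpr ha1)

theorem gap_half_nonneg (ha : 0 < a) (hA : 2 ^ a * log 2 ≤ A) : 0 ≤ gap a A (1 / 2) := by
  have hA0 : 0 ≤ A := (mul_nonneg (rpow_nonneg two_pos.le a) (log_pos one_lt_two).le).trans hA
  have hbase : 0 < 1 - (1 / 2 : ℝ) ^ a := one_sub_rpow_pos ha ⟨by norm_num, by norm_num⟩
  have hlog : log 2 ≤ (1 / 2 : ℝ) ^ a * A := by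
    rwa [one_div, inv_rpow two_pos.le, ← div_eq_inv_mul, le_div_iff₀' (by positivity)]
  have hpow : (1 - (1 / 2 : ℝ) ^ a) ^ A ≤ 1 / 2 := calc
    (1 - (1 / 2 : ℝ) ^ a) ^ A ≤ exp (-(1 / 2 : ℝ) ^ a) ^ A :=
      rpow_le_rpow hbase.le (one_sub_le_exp_neg _) hA0
    _ = exp (-((1 / 2 : ℝ) ^ a * A)) := by rw [← exp_mul, neg_mul]
    _ ≤ exp (-log 2) := exp_le_exp.mpr (neg_le_neg hlog)
    _ = 1 / 2 := by rw [exp_neg, exp_log two_pos, one_div]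
  rw [gap_half]
  linarith

end PowerGap

theorem stmt_17_general (m M : ℝ) (hM : (2 : ℝ) ^ m + logb 2 (log 2) ≤ M) :
    ∀ x ∈ Icc (0 : ℝ) 1,
      1 - (1 - x ^ ((2 : ℝ) ^ m)) ^ ((2 : ℝ) ^ M)
        ≥ (1 - (1 - x) ^ ((2 : ℝ) ^ m)) ^ ((2 : ℝ) ^ M) := by
  intro x hx
  have ha : 0 < (2 : ℝ) ^ m := rpow_pos_of_pos two_pos m
  have hA : (2 : ℝ) ^ (2 : ℝ) ^ m * log 2 ≤ 2 ^ M := calc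
    (2 : ℝ) ^ (2 : ℝ) ^ m * log 2 = 2 ^ ((2 : ℝ) ^ m + logb 2 (log 2)) := by
      rw [rpow_add two_pos, rpow_logb two_pos one_lt_two.ne' (log_pos one_lt_two)]
    _ ≤ 2 ^ M := rpow_le_rpow_of_exponent_le one_le_two hM
  exact sub_nonneg.mp <| PowerGap.gap_nonneg_of_gap_half_nonneg ha (rpow_pos_of_pos two_pos M)
    (PowerGap.gap_half_nonneg ha hA) hx

/-- For `m > 0` and `M := 2^m + log₂(ln 2)`, one has
`1 − (1 − x^(2^m))^(2^M) ≥ (1 − (1 − x)^(2^m))^(2^M)` for all `x ∈ [0,1]`. -/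
theorem stmt_17 (m : ℝ) (hm : 0 < m) (M : ℝ)
    (hM : M = (2 : ℝ) ^ m + Real.logb 2 (Real.log 2)) :
    ∀ x ∈ Set.Icc (0 : ℝ) 1,
      1 - (1 - x ^ ((2 : ℝ) ^ m)) ^ ((2 : ℝ) ^ M)
        ≥ (1 - (1 - x) ^ ((2 : ℝ) ^ m)) ^ ((2 : ℝ) ^ M) :=
  stmt_17_general m M hM.ge
end

section
/- Let m > n > 0 be real numbers, and let M := log₂( ln(2) / (−ln(1 − 2^(−2^m))) ) and N := log₂( ln(2) / (−ln(1 − 2^(−2^n))) ), so that (1 − 2^(−2^m))^(2^M) = 1/2 and (1 − 2^(−2^n))^(2^N) = 1/2. Then for every x ∈ [0,1], both of the following hold: (1 − (1 − x^(2^m))^(2^(M+n)))^(2^N) ≥ (1 − (1 − x^(2^n))^(2^(N+m)))^(2^M), and 1 − (1 − x^(2^(m−n)))^(2^(M+n)) ≥ (1 − (1 − x)^(2^(N+m)))^(2^(M−N)). -/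
/-!
Put `a = 2^m`, `b = 2^n`, `A = 2^M`, `B = 2^N`. The first inequality at `x` is the `B`-th power of
the second one at `x^b`. The second one reads `G ≤ F` with `F x = K_{a/b, Ab}(x)` and
`G x = 1 - K_{Ba, A/B}(1 - x)`, where `K_{r,p}(x) = 1 - (1 - x^r)^p`. The functions `F` and `G`
agree at `0` and `1`, and they are tangent at `c = 2^(-b)`: since `1 - 2^(-a) = 2^(-1/A)` and
`1 - 2^(-b) = 2^(-1/B)`, all quantities involved are powers of `2` there.

After multiplication by `x (1 - x)`, the derivative of `log F' - log G'` is an affine function minus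
nonnegative multiples of functions `(1 - x) / (1 - x^r)` or their reflections, which are convex.
So the set where `log F' - log G'` has nonnegative derivative is an interval. If `F - G` were
negative at a point of `(0, c)`, then `log F' - log G'` would be, in this order, negative and
positive somewhere before `c`, zero at `c`, and zero again after `c` by Rolle's theorem; hence it
would rise, fall and be stationary, a contradiction. The interval `(c, 1)` is symmetric.
-/

open Set

section MeanValue

variable {f f' : ℝ → ℝ}

lemma exists_sign_hasDerivAt_eq_sign_sub {a b : ℝ} (hab : a < b) (hf : ContinuousOn f (Icc a b))
    (hf' : ∀ x ∈ Ioo a b, HasDerivAt f (f' x) x) :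
    ∃ c ∈ Ioo a b, SignType.sign (f' c) = SignType.sign (f b - f a) := by
  obtain ⟨c, hc, hslope⟩ := exists_hasDerivAt_eq_slope f f' hab hf hf'
  refine ⟨c, hc, ?_⟩
  rw [← mul_one (SignType.sign (f' c)), ← sign_pos (sub_pos.2 hab), ← sign_mul, hslope,
    div_mul_cancel₀ _ (sub_pos.2 hab).ne']

lemma le_of_ordConnected_setOf_deriv_nonneg {s : Set ℝ} (hs : s.OrdConnected)
    (hf : ∀ x ∈ s, HasDerivAt f (f' x) x) (hconn : {x ∈ s | 0 ≤ f' x}.OrdConnected)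
    {t₀ t₁ t₂ t₃ : ℝ} (ht₀ : t₀ ∈ s) (ht₃ : t₃ ∈ s) (h₀₁ : t₀ < t₁) (h₁₂ : t₁ < t₂) (h₂₃ : t₂ < t₃)
    (hf₀₁ : f t₀ ≤ f t₁) (hf₂₃ : f t₂ ≤ f t₃) : f t₁ ≤ f t₂ := by
  have hsub : ∀ {u v x}, t₀ ≤ u → v ≤ t₃ → x ∈ Icc u v → x ∈ s := fun hu hv hx =>
    hs.out ht₀ ht₃ ⟨hu.trans hx.1, hx.2.trans hv⟩
  have mvt : ∀ {u v}, t₀ ≤ u → u < v → v ≤ t₃ →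
      ∃ ξ ∈ Ioo u v, SignType.sign (f' ξ) = SignType.sign (f v - f u) := fun hu huv hv =>
    exists_sign_hasDerivAt_eq_sign_sub huv
      (fun x hx => (hf x (hsub hu hv hx)).continuousAt.continuousWithinAt)
      (fun x hx => hf x (hsub hu hv (Ioo_subset_Icc_self hx)))
  obtain ⟨ξ, hξ, hξ_sign⟩ := mvt le_rfl h₀₁ (h₁₂.trans h₂₃).le
  obtain ⟨η, hη, hη_sign⟩ := mvt h₀₁.le h₁₂ h₂₃.le
  obtain ⟨ζ, hζ, hζ_sign⟩ := mvt (h₀₁.trans h₁₂).le h₂₃ le_rfl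
  have hξ_nonneg : 0 ≤ f' ξ := by rwa [← sign_nonneg_iff, hξ_sign, sign_nonneg_iff, sub_nonneg]
  have hζ_nonneg : 0 ≤ f' ζ := by rwa [← sign_nonneg_iff, hζ_sign, sign_nonneg_iff, sub_nonneg]
  have hη_nonneg : 0 ≤ f' η :=
    (hconn.out ⟨hsub le_rfl (h₁₂.trans h₂₃).le (Ioo_subset_Icc_self hξ), hξ_nonneg⟩
      ⟨hsub (h₀₁.trans h₁₂).le le_rfl (Ioo_subset_Icc_self hζ), hζ_nonneg⟩
      ⟨(hξ.2.trans hη.1).le, (hη.2.trans hζ.1).le⟩).2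
  rwa [← sub_nonneg, ← sign_nonneg_iff, ← hη_sign, sign_nonneg_iff]

lemma exists_deriv_neg_exists_deriv_pos {a b x : ℝ} (hf : ContinuousOn f (Icc a b))
    (hf' : ∀ x ∈ Ioo a b, HasDerivAt f (f' x) x) (hx : x ∈ Ioo a b) (hxa : f x < f a)
    (hxb : f x < f b) : ∃ ξ ∈ Ioo a x, ∃ η ∈ Ioo x b, f' ξ < 0 ∧ 0 < f' η := by
  obtain ⟨ξ, hξ, hξ_sign⟩ := exists_sign_hasDerivAt_eq_sign_sub hx.1
    (hf.mono (Icc_subset_Icc_right hx.2.le)) fun y hy => hf' y ⟨hy.1, hy.2.trans hx.2⟩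
  obtain ⟨η, hη, hη_sign⟩ := exists_sign_hasDerivAt_eq_sign_sub hx.2
    (hf.mono (Icc_subset_Icc_left hx.1.le)) fun y hy => hf' y ⟨hx.1.trans hy.1, hy.2⟩
  exact ⟨ξ, hξ, η, hη, by rwa [← sign_eq_neg_one_iff, hξ_sign, sign_eq_neg_one_iff, sub_neg],
    by rwa [← sign_eq_one_iff, hη_sign, sign_eq_one_iff, sub_pos]⟩

theorem nonneg_of_sign_deriv_eq {g g' : ℝ → ℝ} {a b c : ℝ} (hc : c ∈ Ioo a b)
    (hf : ContinuousOn f (Icc a b)) (hf' : ∀ x ∈ Ioo a b, HasDerivAt f (f' x) x)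
    (hsign : ∀ x ∈ Ioo a b, SignType.sign (f' x) = SignType.sign (g x))
    (hg : ∀ x ∈ Ioo a b, HasDerivAt g (g' x) x)
    (hconn : {x ∈ Ioo a b | 0 ≤ g' x}.OrdConnected)
    (hfa : f a = 0) (hfc : f c = 0) (hfb : f b = 0) (hf'c : f' c = 0) :
    ∀ x ∈ Icc a b, 0 ≤ f x := by
  intro x hx
  by_contra! hneg
  have g_neg : ∀ y ∈ Ioo a b, f' y < 0 → g y < 0 := fun y hy h => by
    rwa [← sign_eq_neg_one_iff, ← hsign y hy, sign_eq_neg_one_iff]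
  have g_pos : ∀ y ∈ Ioo a b, 0 < f' y → 0 < g y := fun y hy h => by
    rwa [← sign_eq_one_iff, ← hsign y hy, sign_eq_one_iff]
  have g_zero : ∀ y ∈ Ioo a b, f' y = 0 → g y = 0 := fun y hy h => by
    rwa [← sign_eq_zero_iff, ← hsign y hy, sign_eq_zero_iff]
  have hgc : g c = 0 := g_zero c hc hf'c
  have hfac : ContinuousOn f (Icc a c) := hf.mono (Icc_subset_Icc_right hc.2.le)
  have hfcb : ContinuousOn f (Icc c b) := hf.mono (Icc_subset_Icc_left hc.1.le)
  have hf'ac : ∀ y ∈ Ioo a c, HasDerivAt f (f' y) y := fun y hy => hf' y ⟨hy.1, hy.2.trans hc.2⟩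
  have hf'cb : ∀ y ∈ Ioo c b, HasDerivAt f (f' y) y := fun y hy => hf' y ⟨hc.1.trans hy.1, hy.2⟩
  have hax : a < x := hx.1.lt_of_ne (by rintro rfl; exact hneg.ne hfa)
  have hxb : x < b := hx.2.lt_of_ne (by rintro rfl; exact hneg.ne hfb)
  rcases lt_trichotomy x c with hxc | rfl | hcx
  · obtain ⟨ξ, hξ, η, hη, hf'ξ, hf'η⟩ := exists_deriv_neg_exists_deriv_pos hfac hf'ac ⟨hax, hxc⟩
      (hneg.trans_eq hfa.symm) (hneg.trans_eq hfc.symm)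
    obtain ⟨ζ, hζ, hf'ζ⟩ := exists_hasDerivAt_eq_zero hc.2 hfcb (hfc.trans hfb.symm) hf'cb
    have hgξ := g_neg ξ ⟨hξ.1, hξ.2.trans hxb⟩ hf'ξ
    have hgη := g_pos η ⟨hax.trans hη.1, hη.2.trans hc.2⟩ hf'η
    have hgζ := g_zero ζ ⟨hc.1.trans hζ.1, hζ.2⟩ hf'ζ
    have : g η ≤ g c := le_of_ordConnected_setOf_deriv_nonneg ordConnected_Ioo hg hconn
      ⟨hξ.1, hξ.2.trans hxb⟩ ⟨hc.1.trans hζ.1, hζ.2⟩ (hξ.2.trans hη.1) hη.2 hζ.1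
      (hgξ.trans hgη).le (hgc.trans hgζ.symm).le
    linarith
  · exact hneg.ne hfc
  · obtain ⟨ζ, hζ, hf'ζ⟩ := exists_hasDerivAt_eq_zero hc.1 hfac (hfa.trans hfc.symm) hf'ac
    obtain ⟨ξ, hξ, η, hη, hf'ξ, hf'η⟩ := exists_deriv_neg_exists_deriv_pos hfcb hf'cb ⟨hcx, hxb⟩
      (hneg.trans_eq hfc.symm) (hneg.trans_eq hfb.symm)
    have hgζ := g_zero ζ ⟨hζ.1, hζ.2.trans hc.2⟩ hf'ζ
    have hgξ := g_neg ξ ⟨hc.1.trans hξ.1, hξ.2.trans hxb⟩ hf'ξ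
    have hgη := g_pos η ⟨hax.trans hη.1, hη.2⟩ hf'η
    have : g c ≤ g ξ := le_of_ordConnected_setOf_deriv_nonneg ordConnected_Ioo hg hconn
      ⟨hζ.1, hζ.2.trans hc.2⟩ ⟨hax.trans hη.1, hη.2⟩ hζ.2 hξ.1 (hξ.2.trans hη.1)
      (hgζ.trans hgc.symm).le (hgξ.trans hgη).le
    linarith

end MeanValue

section Convexity

open Real

variable {r x : ℝ}

lemma one_sub_rpow_pos (hr : 0 < r) (hx : x ∈ Ico 0 1) : 0 < 1 - x ^ r :=
  sub_pos.2 (rpow_lt_one hx.1 hx.2 hr)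

lemma hasDerivAt_one_sub_rpow (hx : x ≠ 0) :
    HasDerivAt (fun y : ℝ => 1 - y ^ r) (-(r * x ^ (r - 1))) x :=
  (hasDerivAt_rpow_const (Or.inl hx)).const_sub 1

lemma mul_rpow_sub_one_le (hr : 1 ≤ r) (hx : 0 < x) : r * x ^ (r - 1) ≤ 1 + (r - 1) * x ^ r := by
  have bernoulli : 1 + r * (x⁻¹ - 1) ≤ (x ^ r)⁻¹ := by
    have := one_add_mul_self_le_rpow_one_add (s := x⁻¹ - 1) (by linarith [inv_pos.2 hx]) hr
    rwa [add_sub_cancel, inv_rpow hx.le] at this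
  have hxr : 0 < x ^ r := rpow_pos_of_pos hx r
  have := mul_le_mul_of_nonneg_left bernoulli hxr.le
  rw [mul_inv_cancel₀ hxr.ne'] at this
  rw [rpow_sub_one hx.ne', div_eq_mul_inv]
  linarith

lemma add_one_mul_sub_rpow_le (hr : 1 ≤ r) (hx : x ∈ Ioo 0 1) :
    (r + 1) * (x - x ^ r) ≤ (r - 1) * (1 - x ^ (r + 1)) := by
  let E : ℝ → ℝ := fun y => (r - 1) * (1 - y ^ (r + 1)) - (r + 1) * (y - y ^ r)
  have hE : ∀ y ∈ Ioc (0 : ℝ) 1, HasDerivAt E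
      (-((r + 1) * (1 + (r - 1) * y ^ r - r * y ^ (r - 1)))) y := fun y hy => by
    refine (((hasDerivAt_one_sub_rpow hy.1.ne').const_mul (r - 1)).sub
      (((hasDerivAt_id y).sub
        (hasDerivAt_rpow_const (Or.inl hy.1.ne'))).const_mul (r + 1))).congr_deriv ?_
    rw [add_sub_cancel_right]
    ring
  have hanti : AntitoneOn E (Ioc 0 1) :=
    antitoneOn_of_hasDerivWithinAt_nonpos (convex_Ioc 0 1)
      (fun y hy => (hE y hy).continuousAt.continuousWithinAt)
      (fun y hy => (hE y (interior_subset hy)).hasDerivWithinAt)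
      (fun y hy => neg_nonpos.2 <| mul_nonneg (by linarith) <| sub_nonneg.2 <|
        mul_rpow_sub_one_le hr (interior_subset hy).1)
  have hE1 : E 1 = 0 := by simp only [E, one_rpow, sub_self, mul_zero]
  exact sub_nonneg.1 (hE1.symm.trans_le
    (hanti (Ioo_subset_Ioc_self hx) (right_mem_Ioc.2 one_pos) hx.2.le))

lemma hasDerivAt_one_sub_div_one_sub_rpow (hr : 0 < r) (hx : x ∈ Ioo 0 1) :
    HasDerivAt (fun y : ℝ => (1 - y) / (1 - y ^ r))
      (((1 - x) * (r * x ^ (r - 1)) - (1 - x ^ r)) / (1 - x ^ r) ^ 2) x := by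
  refine (((hasDerivAt_id x).const_sub 1).div (hasDerivAt_one_sub_rpow hx.1.ne')
    (one_sub_rpow_pos hr (Ioo_subset_Ico_self hx)).ne').congr_deriv ?_
  simp only [id]
  ring

lemma hasDerivAt_deriv_one_sub_div_one_sub_rpow (hr : 0 < r) (hx : x ∈ Ioo 0 1) :
    HasDerivAt (fun y : ℝ => ((1 - y) * (r * y ^ (r - 1)) - (1 - y ^ r)) / (1 - y ^ r) ^ 2)
      (r * x ^ (r - 2) * ((r - 1) * (1 - x ^ (r + 1)) - (r + 1) * (x - x ^ r))
        / (1 - x ^ r) ^ 3) x := by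
  have hQ := (one_sub_rpow_pos hr (Ioo_subset_Ico_self hx)).ne'
  have hdQ := hasDerivAt_one_sub_rpow (r := r) hx.1.ne'
  refine (((((hasDerivAt_id x).const_sub 1).mul
    ((hasDerivAt_rpow_const (p := r - 1) (Or.inl hx.1.ne')).const_mul r)).sub hdQ).div
      (hdQ.pow 2) (pow_ne_zero 2 hQ)).congr_deriv ?_
  have e₁ : x ^ (r - 1) = x ^ (r - 2) * x := by
    rw [← rpow_add_one hx.1.ne']; congr 1; ring
  have e₂ : x ^ r = x ^ (r - 2) * x ^ 2 := by
    rw [← rpow_add_natCast hx.1.ne']; congr 1; push_cast; ring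
  rw [rpow_add_one hx.1.ne', show r - 1 - 1 = r - 2 by ring]
  simp only [id, Pi.pow_apply, Pi.sub_apply, Pi.mul_apply]
  rw [e₁]
  rw [e₂] at hQ ⊢
  field_simp
  push_cast
  ring

lemma convexOn_one_sub_div_one_sub_rpow (hr : 1 ≤ r) :
    ConvexOn ℝ (Ioo 0 1) (fun x : ℝ => (1 - x) / (1 - x ^ r)) := by
  have hr₀ : 0 < r := one_pos.trans_le hr
  refine convexOn_of_hasDerivWithinAt2_nonneg (convex_Ioo 0 1)
    (fun x hx =>
      (hasDerivAt_one_sub_div_one_sub_rpow hr₀ hx).continuousAt.continuousWithinAt)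
    (fun x hx => (hasDerivAt_one_sub_div_one_sub_rpow hr₀ (interior_subset hx)).hasDerivWithinAt)
    (fun x hx =>
      (hasDerivAt_deriv_one_sub_div_one_sub_rpow hr₀ (interior_subset hx)).hasDerivWithinAt)
    fun x hx => ?_
  rw [interior_Ioo] at hx
  exact div_nonneg (mul_nonneg (mul_nonneg hr₀.le (rpow_nonneg hx.1.le _))
      (sub_nonneg.2 (add_one_mul_sub_rpow_le hr hx)))
    (pow_nonneg (one_sub_rpow_pos hr₀ (Ioo_subset_Ico_self hx)).le 3)

end Convexity

section Kumaraswamy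

open Real

lemma sign_log_sub_log {u v : ℝ} (hu : 0 < u) (hv : 0 < v) :
    SignType.sign (log u - log v) = SignType.sign (u - v) := by
  rcases lt_trichotomy u v with h | rfl | h
  · rw [sign_neg (sub_neg.2 h), sign_neg (sub_neg.2 (log_lt_log hu h))]
  · rw [sub_self, sub_self]
  · rw [sign_pos (sub_pos.2 h), sign_pos (sub_pos.2 (log_lt_log hv h))]

/-- The distribution function on `[0, 1]` of the Kumaraswamy distribution with shape parameters
`a` and `b`. In the notation `I₀`, `I₁` of the theorem, `I₁^v (I₀^u x)` is
`kumaraswamyCDF (2 ^ u) (2 ^ v) x` and `I₀^v (I₁^u x)` is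
`1 - kumaraswamyCDF (2 ^ u) (2 ^ v) (1 - x)`. -/
noncomputable def kumaraswamyCDF (a b x : ℝ) : ℝ := 1 - (1 - x ^ a) ^ b

/-- The density on `(0, 1)` of the Kumaraswamy distribution with shape parameters `a` and `b`. -/
noncomputable def kumaraswamyPDF (a b x : ℝ) : ℝ := a * b * x ^ (a - 1) * (1 - x ^ a) ^ (b - 1)

/-- The logarithmic derivative on `(0, 1)` of the Kumaraswamy density. -/
noncomputable def kumaraswamyScore (a b x : ℝ) : ℝ :=
  (a - 1) / x - (b - 1) * (a * x ^ (a - 1) / (1 - x ^ a))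

variable {a b x : ℝ}

lemma kumaraswamyCDF_zero (ha : a ≠ 0) : kumaraswamyCDF a b 0 = 0 := by
  simp only [kumaraswamyCDF, zero_rpow ha, sub_zero, one_rpow, sub_self]

lemma kumaraswamyCDF_one (hb : b ≠ 0) : kumaraswamyCDF a b 1 = 1 := by
  simp only [kumaraswamyCDF, one_rpow, sub_self, zero_rpow hb, sub_zero]

lemma continuous_kumaraswamyCDF (ha : 0 ≤ a) (hb : 0 ≤ b) : Continuous (kumaraswamyCDF a b) :=
  continuous_const.sub <|
    (continuous_const.sub (continuous_id.rpow_const fun _ => Or.inr ha)).rpow_const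
      fun _ => Or.inr hb

lemma hasDerivAt_kumaraswamyCDF (ha : 0 < a) (hx : x ∈ Ioo 0 1) :
    HasDerivAt (kumaraswamyCDF a b) (kumaraswamyPDF a b x) x := by
  refine (((hasDerivAt_one_sub_rpow hx.1.ne').rpow_const (p := b)
    (Or.inl (one_sub_rpow_pos ha (Ioo_subset_Ico_self hx)).ne')).const_sub 1).congr_deriv ?_
  rw [kumaraswamyPDF]
  ring

lemma kumaraswamyPDF_pos (ha : 0 < a) (hb : 0 < b) (hx : x ∈ Ioo 0 1) :
    0 < kumaraswamyPDF a b x :=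
  mul_pos (mul_pos (mul_pos ha hb) (rpow_pos_of_pos hx.1 _))
    (rpow_pos_of_pos (one_sub_rpow_pos ha (Ioo_subset_Ico_self hx)) _)

lemma hasDerivAt_log_kumaraswamyPDF (ha : 0 < a) (hb : 0 < b) (hx : x ∈ Ioo 0 1) :
    HasDerivAt (fun y => log (kumaraswamyPDF a b y)) (kumaraswamyScore a b x) x := by
  have hlog : ∀ y ∈ Ioo (0 : ℝ) 1, log (kumaraswamyPDF a b y) =
      log (a * b) + (a - 1) * log y + (b - 1) * log (1 - y ^ a) := fun y hy => by
    have hQ := one_sub_rpow_pos ha (Ioo_subset_Ico_self hy)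
    rw [kumaraswamyPDF, log_mul (mul_pos (mul_pos ha hb) (rpow_pos_of_pos hy.1 _)).ne'
      (rpow_pos_of_pos hQ _).ne', log_mul (mul_pos ha hb).ne' (rpow_pos_of_pos hy.1 _).ne',
      log_rpow hy.1, log_rpow hQ]
  have hderiv := (((hasDerivAt_log hx.1.ne').const_mul (a - 1)).const_add (log (a * b))).add
    (((hasDerivAt_one_sub_rpow hx.1.ne').log
      (one_sub_rpow_pos ha (Ioo_subset_Ico_self hx)).ne').const_mul (b - 1))
  refine (hderiv.congr_deriv ?_).congr_of_eventuallyEq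
    (Filter.eventuallyEq_of_mem (isOpen_Ioo.mem_nhds hx) hlog)
  rw [kumaraswamyScore]
  ring

lemma mul_one_sub_mul_kumaraswamyScore (ha : 0 < a) (hx : x ∈ Ioo 0 1) :
    x * (1 - x) * kumaraswamyScore a b x =
      (a * b - 1) * (1 - x) - a * (b - 1) * ((1 - x) / (1 - x ^ a)) := by
  have hQ : 1 - x ^ a ≠ 0 := (one_sub_rpow_pos ha (Ioo_subset_Ico_self hx)).ne'
  have hx₀ : x ≠ 0 := hx.1.ne'
  rw [kumaraswamyScore, rpow_sub_one hx₀]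
  field_simp
  ring

lemma concaveOn_mul_one_sub_mul_kumaraswamyScore (ha : 1 ≤ a) (hb : 1 ≤ b) :
    ConcaveOn ℝ (Ioo 0 1) (fun x => x * (1 - x) * kumaraswamyScore a b x) := by
  have haffine : ConcaveOn ℝ (Ioo 0 1) (fun x : ℝ => (a * b - 1) * (1 - x)) :=
    ((concaveOn_const 1 (convex_Ioo 0 1)).sub (convexOn_id (convex_Ioo 0 1))).smul
      (sub_nonneg.2 (one_le_mul_of_one_le_of_one_le ha hb))
  have hconvex := (convexOn_one_sub_div_one_sub_rpow ha).smul
    (mul_nonneg (zero_le_one.trans ha) (sub_nonneg.2 hb))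
  exact (haffine.sub hconvex).congr fun x hx =>
    (mul_one_sub_mul_kumaraswamyScore (one_pos.trans_le ha) hx).symm

variable {p q : ℝ}

lemma ordConnected_setOf_kumaraswamyScore_add_nonneg (ha : 1 ≤ a) (hb : 1 ≤ b) (hp : 1 ≤ p)
    (hq : 1 ≤ q) :
    {x ∈ Ioo 0 1 | 0 ≤ kumaraswamyScore a b x + kumaraswamyScore p q (1 - x)}.OrdConnected := by
  have hreflect : ConcaveOn ℝ (Ioo 0 1)
      (fun x => (1 - x) * (1 - (1 - x)) * kumaraswamyScore p q (1 - x)) := by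
    have h := (concaveOn_mul_one_sub_mul_kumaraswamyScore hp hq).comp_affineMap
      (AffineEquiv.constVSub ℝ (1 : ℝ)).toAffineMap
    exact h.subset (fun x hx => Ioo.one_sub_mem hx) (convex_Ioo 0 1)
  have hconcave := (concaveOn_mul_one_sub_mul_kumaraswamyScore ha hb).add hreflect
  suffices h : {x ∈ Ioo 0 1 | 0 ≤ kumaraswamyScore a b x + kumaraswamyScore p q (1 - x)} = _ from
    h ▸ (hconcave.convex_ge 0).ordConnected
  ext x
  refine and_congr_right fun hx => ?_
  rw [Pi.add_apply, sub_sub_cancel, mul_comm (1 - x) x, ← mul_add,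
    mul_nonneg_iff_of_pos_left (mul_pos hx.1 (sub_pos.2 hx.2))]

theorem one_le_kumaraswamyCDF_add_of_tangent (ha : 1 ≤ a) (hb : 1 ≤ b) (hp : 1 ≤ p) (hq : 1 ≤ q)
    {c : ℝ} (hc : c ∈ Ioo 0 1) (hcdf : kumaraswamyCDF a b c + kumaraswamyCDF p q (1 - c) = 1)
    (hpdf : kumaraswamyPDF a b c = kumaraswamyPDF p q (1 - c)) :
    ∀ x ∈ Icc 0 1, 1 ≤ kumaraswamyCDF a b x + kumaraswamyCDF p q (1 - x) := by
  have ha₀ : 0 < a := one_pos.trans_le ha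
  have hb₀ : 0 < b := one_pos.trans_le hb
  have hp₀ : 0 < p := one_pos.trans_le hp
  have hq₀ : 0 < q := one_pos.trans_le hq
  have hreflect {f : ℝ → ℝ} {f' x : ℝ} (h : HasDerivAt f f' (1 - x)) :
      HasDerivAt (fun y => f (1 - y)) (-f') x := h.comp_const_sub 1 x
  have hcont : Continuous fun x => kumaraswamyCDF a b x + kumaraswamyCDF p q (1 - x) - 1 :=
    ((continuous_kumaraswamyCDF ha₀.le hb₀.le).add ((continuous_kumaraswamyCDF hp₀.le hq₀.le).comp
      (continuous_const.sub continuous_id))).sub continuous_const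
  have hderiv : ∀ x ∈ Ioo (0 : ℝ) 1,
      HasDerivAt (fun y => kumaraswamyCDF a b y + kumaraswamyCDF p q (1 - y) - 1)
        (kumaraswamyPDF a b x - kumaraswamyPDF p q (1 - x)) x := fun x hx =>
    ((hasDerivAt_kumaraswamyCDF ha₀ hx).add
      (hreflect (hasDerivAt_kumaraswamyCDF hp₀ (Ioo.one_sub_mem hx)))).sub_const 1
  have hlog_deriv : ∀ x ∈ Ioo (0 : ℝ) 1,
      HasDerivAt (fun y => log (kumaraswamyPDF a b y) - log (kumaraswamyPDF p q (1 - y)))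
        (kumaraswamyScore a b x + kumaraswamyScore p q (1 - x)) x := fun x hx => by
    simpa only [sub_neg_eq_add] using! (hasDerivAt_log_kumaraswamyPDF ha₀ hb₀ hx).sub
      (hreflect (hasDerivAt_log_kumaraswamyPDF hp₀ hq₀ (Ioo.one_sub_mem hx)))
  intro x hx
  refine sub_nonneg.1 (nonneg_of_sign_deriv_eq hc hcont.continuousOn hderiv
    (fun y hy => (sign_log_sub_log (kumaraswamyPDF_pos ha₀ hb₀ hy)
      (kumaraswamyPDF_pos hp₀ hq₀ (Ioo.one_sub_mem hy))).symm) hlog_deriv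
    (ordConnected_setOf_kumaraswamyScore_add_nonneg ha hb hp hq) ?_ (sub_eq_zero.2 hcdf) ?_
    (sub_eq_zero.2 hpdf) x hx)
  · rw [kumaraswamyCDF_zero ha₀.ne', sub_zero, kumaraswamyCDF_one hq₀.ne', zero_add, sub_self]
  · rw [kumaraswamyCDF_one hb₀.ne', sub_self, kumaraswamyCDF_zero hp₀.ne', add_zero, sub_self]

end Kumaraswamy

section HalvingExponents

open Real

lemma one_sub_two_rpow_neg_two_rpow {m M : ℝ}
    (hM : M = logb 2 (log 2 / -log (1 - (2 : ℝ) ^ (-(2 : ℝ) ^ m)))) :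
    1 - (2 : ℝ) ^ (-(2 : ℝ) ^ m) = 2 ^ (-((2 : ℝ) ^ M)⁻¹) := by
  have hlt : (2 : ℝ) ^ (-(2 : ℝ) ^ m) < 1 :=
    rpow_lt_one_of_one_lt_of_neg one_lt_two (neg_lt_zero.2 (rpow_pos_of_pos two_pos m))
  have hlog : 0 < -log (1 - (2 : ℝ) ^ (-(2 : ℝ) ^ m)) :=
    neg_pos.2 (log_neg (sub_pos.2 hlt) (sub_lt_self 1 (rpow_pos_of_pos two_pos _)))
  rw [hM, rpow_logb two_pos (by norm_num) (div_pos (log_pos one_lt_two) hlog), inv_div, ← neg_div,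
    neg_neg, log_div_log, rpow_logb two_pos (by norm_num) (sub_pos.2 hlt)]

lemma rpow_eq_half {t A : ℝ} (hA : A ≠ 0) (ht : t = 2 ^ (-A⁻¹)) : t ^ A = 1 / 2 := by
  rw [ht, ← rpow_mul two_pos.le, neg_mul, inv_mul_cancel₀ hA, rpow_neg_one, one_div]

lemma two_rpow_neg_two_rpow_le_half {m : ℝ} (hm : 0 ≤ m) :
    (2 : ℝ) ^ (-(2 : ℝ) ^ m) ≤ 1 / 2 := by
  rw [one_div, ← rpow_neg_one]
  exact rpow_le_rpow_of_exponent_le one_le_two (neg_le_neg (one_le_rpow one_le_two hm))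

variable {a b A B : ℝ}

lemma inv_le_of_two_rpow_neg_add_le (hA : 1 - (2 : ℝ) ^ (-a) = 2 ^ (-A⁻¹))
    (hab : (2 : ℝ) ^ (-a) + 2 ^ (-b) ≤ 1) : A⁻¹ ≤ b := by
  have : (2 : ℝ) ^ (-b) ≤ 2 ^ (-A⁻¹) := by linarith
  rwa [rpow_le_rpow_left_iff one_lt_two, neg_le_neg_iff] at this

lemma le_of_one_sub_two_rpow_neg_eq (hA₀ : 0 < A) (hB₀ : 0 < B)
    (hA : 1 - (2 : ℝ) ^ (-a) = 2 ^ (-A⁻¹)) (hB : 1 - (2 : ℝ) ^ (-b) = 2 ^ (-B⁻¹)) (hba : b ≤ a) :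
    B ≤ A := by
  have hab : (2 : ℝ) ^ (-a) ≤ 2 ^ (-b) :=
    rpow_le_rpow_of_exponent_le one_le_two (neg_le_neg hba)
  have : (2 : ℝ) ^ (-B⁻¹) ≤ 2 ^ (-A⁻¹) := by linarith
  rwa [rpow_le_rpow_left_iff one_lt_two, neg_le_neg_iff, inv_le_inv₀ hA₀ hB₀] at this

theorem one_sub_kumaraswamyCDF_le (hb₀ : 0 < b) (hA₀ : 0 < A) (hB₀ : 0 < B) (hba : b ≤ a)
    (hA : 1 - (2 : ℝ) ^ (-a) = 2 ^ (-A⁻¹)) (hB : 1 - (2 : ℝ) ^ (-b) = 2 ^ (-B⁻¹))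
    (hab : (2 : ℝ) ^ (-a) + 2 ^ (-b) ≤ 1) {x : ℝ} (hx : x ∈ Icc 0 1) :
    1 - kumaraswamyCDF (B * a) (A / B) (1 - x) ≤ kumaraswamyCDF (a / b) (A * b) x := by
  have two_rpow_rpow (u v : ℝ) : ((2 : ℝ) ^ u) ^ v = 2 ^ (u * v) := (rpow_mul two_pos.le u v).symm
  have hc_rpow : ((2 : ℝ) ^ (-b)) ^ (a / b) = 2 ^ (-a) := by
    rw [two_rpow_rpow]; congr 1; field_simp
  have hB_rpow : ((2 : ℝ) ^ (-B⁻¹)) ^ (B * a) = 2 ^ (-a) := by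
    rw [two_rpow_rpow]; congr 1; field_simp
  have hA_rpow : ((2 : ℝ) ^ (-A⁻¹)) ^ (A * b) = 2 ^ (-b) := by
    rw [two_rpow_rpow]; congr 1; field_simp
  have hAB_rpow : ((2 : ℝ) ^ (-A⁻¹)) ^ (A / B) = 2 ^ (-B⁻¹) := by
    rw [two_rpow_rpow]; congr 1; field_simp
  refine sub_le_iff_le_add.2 <| one_le_kumaraswamyCDF_add_of_tangent (c := 2 ^ (-b))
    ((one_le_div hb₀).2 hba)
    ((inv_le_iff_one_le_mul₀' hA₀).1 (inv_le_of_two_rpow_neg_add_le hA hab))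
    ((inv_le_iff_one_le_mul₀' hB₀).1 (inv_le_of_two_rpow_neg_add_le hB (by rwa [add_comm])))
    ((one_le_div hB₀).2 (le_of_one_sub_two_rpow_neg_eq hA₀ hB₀ hA hB hba))
    ⟨by positivity, rpow_lt_one_of_one_lt_of_neg one_lt_two (neg_lt_zero.2 hb₀)⟩ ?_ ?_ x hx
  · rw [kumaraswamyCDF, kumaraswamyCDF, hB, hc_rpow, hB_rpow, hA, hA_rpow, hAB_rpow, ← hB]
    ring
  · have hc₀ : (2 : ℝ) ^ (-b) ≠ 0 := by positivity
    have hA₀' : (2 : ℝ) ^ (-A⁻¹) ≠ 0 := by positivity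
    have hB₀' : (2 : ℝ) ^ (-B⁻¹) ≠ 0 := by positivity
    rw [kumaraswamyPDF, kumaraswamyPDF, hB, hc_rpow, hB_rpow, hA, rpow_sub_one hc₀,
      rpow_sub_one hB₀', rpow_sub_one hA₀', rpow_sub_one hA₀', hc_rpow, hB_rpow, hA_rpow, hAB_rpow]
    field_simp

theorem kumaraswamyCDF_rpow_le (hb₀ : 0 < b) (hA₀ : 0 < A) (hB₀ : 0 < B) (hba : b ≤ a)
    (hA : 1 - (2 : ℝ) ^ (-a) = 2 ^ (-A⁻¹)) (hB : 1 - (2 : ℝ) ^ (-b) = 2 ^ (-B⁻¹))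
    (hab : (2 : ℝ) ^ (-a) + 2 ^ (-b) ≤ 1) {x : ℝ} (hx : x ∈ Icc 0 1) :
    kumaraswamyCDF b (B * a) x ^ A ≤ kumaraswamyCDF a (A * b) x ^ B := by
  have hxb : x ^ b ∈ Icc (0 : ℝ) 1 := ⟨rpow_nonneg hx.1 _, rpow_le_one hx.1 hx.2 hb₀.le⟩
  have hF₀ : 0 ≤ kumaraswamyCDF b (B * a) x :=
    sub_nonneg.2 (rpow_le_one (sub_nonneg.2 hxb.2) (sub_le_self 1 hxb.1)
      (mul_nonneg hB₀.le (hb₀.le.trans hba)))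
  have hle : kumaraswamyCDF b (B * a) x ^ (A / B) ≤ kumaraswamyCDF (a / b) (A * b) (x ^ b) := by
    have := one_sub_kumaraswamyCDF_le hb₀ hA₀ hB₀ hba hA hB hab hxb
    rwa [kumaraswamyCDF.eq_def (B * a), sub_sub_cancel] at this
  calc kumaraswamyCDF b (B * a) x ^ A = (kumaraswamyCDF b (B * a) x ^ (A / B)) ^ B := by
        rw [← rpow_mul hF₀, div_mul_cancel₀ _ hB₀.ne']
    _ ≤ kumaraswamyCDF (a / b) (A * b) (x ^ b) ^ B :=
        rpow_le_rpow (rpow_nonneg hF₀ _) hle hB₀.le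
    _ = kumaraswamyCDF a (A * b) x ^ B := by
        rw [kumaraswamyCDF, kumaraswamyCDF, ← rpow_mul hx.1, mul_div_cancel₀ _ hb₀.ne']

end HalvingExponents

/-- With `a, b, A, B` the powers of `2` with exponents `m, n, M, N`, the hypothesis `hmn` says
exactly that the exponents `A b` and `B a` are at least `1`. It allows `n ≤ 0` if `m` is large. -/
theorem stmt_18_general (m n : ℝ) (hnm : n ≤ m)
    (hmn : (2 : ℝ) ^ (-(2 : ℝ) ^ m) + (2 : ℝ) ^ (-(2 : ℝ) ^ n) ≤ 1) (M N : ℝ)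
    (hM : M = Real.logb 2 (Real.log 2 / (-Real.log (1 - (2 : ℝ) ^ (-(2 : ℝ) ^ m)))))
    (hN : N = Real.logb 2 (Real.log 2 / (-Real.log (1 - (2 : ℝ) ^ (-(2 : ℝ) ^ n))))) :
    (1 - (2 : ℝ) ^ (-(2 : ℝ) ^ m)) ^ ((2 : ℝ) ^ M) = 1 / 2 ∧
    (1 - (2 : ℝ) ^ (-(2 : ℝ) ^ n)) ^ ((2 : ℝ) ^ N) = 1 / 2 ∧
    ∀ x ∈ Set.Icc (0 : ℝ) 1,
      (1 - (1 - x ^ ((2 : ℝ) ^ m)) ^ ((2 : ℝ) ^ (M + n))) ^ ((2 : ℝ) ^ N)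
        ≥ (1 - (1 - x ^ ((2 : ℝ) ^ n)) ^ ((2 : ℝ) ^ (N + m))) ^ ((2 : ℝ) ^ M) ∧
      1 - (1 - x ^ ((2 : ℝ) ^ (m - n))) ^ ((2 : ℝ) ^ (M + n))
        ≥ (1 - (1 - x) ^ ((2 : ℝ) ^ (N + m))) ^ ((2 : ℝ) ^ (M - N)) := by
  have hA := one_sub_two_rpow_neg_two_rpow hM
  have hB := one_sub_two_rpow_neg_two_rpow hN
  have hba : (2 : ℝ) ^ n ≤ 2 ^ m := Real.rpow_le_rpow_of_exponent_le one_le_two hnm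
  have two_rpow_pos (u : ℝ) : 0 < (2 : ℝ) ^ u := Real.rpow_pos_of_pos two_pos u
  refine ⟨rpow_eq_half (two_rpow_pos M).ne' hA, rpow_eq_half (two_rpow_pos N).ne' hB,
    fun x hx => ?_⟩
  rw [Real.rpow_add two_pos, Real.rpow_add two_pos, Real.rpow_sub two_pos, Real.rpow_sub two_pos]
  constructor
  · exact kumaraswamyCDF_rpow_le (two_rpow_pos n) (two_rpow_pos M) (two_rpow_pos N) hba hA hB hmn hx
  · have hle := one_sub_kumaraswamyCDF_le (two_rpow_pos n) (two_rpow_pos M) (two_rpow_pos N) hba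
      hA hB hmn hx
    rwa [kumaraswamyCDF, kumaraswamyCDF, sub_sub_cancel] at hle

/-- Lightning corollary: for `m > n > 0`, with `M` and `N` defined so that
`(1 − 2^(−2^m))^(2^M) = 1/2` and `(1 − 2^(−2^n))^(2^N) = 1/2`, one has both
`0^m 1^M 1^n 0^N ≽ 0^n 1^N 1^m 0^M` and `0^(m−n) 1^(M+n) ≽ 1^(N+m) 0^(M−N)`. -/
theorem stmt_18 (m n : ℝ) (hn : 0 < n) (hnm : n < m) (M N : ℝ)
    (hM : M = Real.logb 2 (Real.log 2 / (-Real.log (1 - (2 : ℝ) ^ (-(2 : ℝ) ^ m)))))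
    (hN : N = Real.logb 2 (Real.log 2 / (-Real.log (1 - (2 : ℝ) ^ (-(2 : ℝ) ^ n))))) :
    (1 - (2 : ℝ) ^ (-(2 : ℝ) ^ m)) ^ ((2 : ℝ) ^ M) = 1 / 2 ∧
    (1 - (2 : ℝ) ^ (-(2 : ℝ) ^ n)) ^ ((2 : ℝ) ^ N) = 1 / 2 ∧
    ∀ x ∈ Set.Icc (0 : ℝ) 1,
      (1 - (1 - x ^ ((2 : ℝ) ^ m)) ^ ((2 : ℝ) ^ (M + n))) ^ ((2 : ℝ) ^ N)
        ≥ (1 - (1 - x ^ ((2 : ℝ) ^ n)) ^ ((2 : ℝ) ^ (N + m))) ^ ((2 : ℝ) ^ M) ∧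
      1 - (1 - x ^ ((2 : ℝ) ^ (m - n))) ^ ((2 : ℝ) ^ (M + n))
        ≥ (1 - (1 - x) ^ ((2 : ℝ) ^ (N + m))) ^ ((2 : ℝ) ^ (M - N)) := by
  refine stmt_18_general m n hnm.le ?_ M N hM hN
  linarith [two_rpow_neg_two_rpow_le_half (hn.trans hnm).le, two_rpow_neg_two_rpow_le_half hn.le]
end

section
/- Let n > 1 be an integer, let a₁, …, aₙ ∈ {0,1}, and set bⱼ := 1 − aⱼ for each j. Suppose that for every m with 1 ≤ m ≤ n−1 one has I_{a₁⋯a_m}(1/2) ≤ 1/2, and that I_{a₁⋯aₙ}(1/2) ≥ 1/2. Then for every x ∈ [0,1], I_{a₁⋯aₙ}(x) ≥ I_{b₁⋯bₙ}(x). -/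
/-- For a bit string, apply from left to right the map `x ↦ x²` for each bit `0`
and the map `x ↦ 1 − (1 − x)²` for each bit `1`. -/
def Istr : List ℕ → ℝ → ℝ
  | [], x => x
  | w :: ws, x => Istr ws (if w = 0 then x ^ 2 else 1 - (1 - x) ^ 2)

/-!
Complementing every bit conjugates `I` by `x ↦ 1 - x`, so the claim is `I_a(x) + I_a(1 - x) ≥ 1`.
Follow `u = I(x)`, `v = I(1 - x)`, `z = I(1/2)` along the prefixes of `a`, and write `z = (1/2)^c`
with `c ≥ 1`. The invariant is that `u ≥ y^c` and `v ≥ (1 - y)^c` for some `y ∈ [0, 1]`.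
Squaring preserves it, with `2c` in place of `c`. For the other map, let
`1 - (1 - z)² = (1/2)^C`, `S = 1/C` and `F(y) = (1 - (1 - y^c)²)^S`; then `F(y)` takes the place of
`y`, provided that `F(y) + F(1 - y) ≥ 1`. At the last bit this inequality with `C = 1` is the claim.

The function `y ↦ F(y) + F(1 - y)` is at least `1` at `0`, `1/2` and `1`, so it is enough that on
`(0, 1/2)` its derivative changes sign at most once, from `+` to `-`. The sign is that of
`log F'(y) - log F'(1 - y)`, which vanishes at `1/2`; so it is enough that the derivative of this
difference changes sign at most once, from `-` to `+`. Multiplied by `y (1 - y)`, that derivative is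
`g(y) + g(1 - y)` with `g(y) = y (1 - y) (log F')'(y)`, and it increases on `(0, 1/2)` because `g`
is concave: `g` is an affine function minus `c` times the product of the two convex increasing
functions `(1 - y) y^c / (1 - y^c)` and `S + (1 - S) / (2 - y^c)`.
-/

open Real Set

section Symmetrization

theorem min_le_of_hasDerivAt_of_sign_change {f f' : ℝ → ℝ} {a b x : ℝ}
    (hf : ContinuousOn f (Icc a b)) (hf' : ∀ t ∈ Ioo a b, HasDerivAt f (f' t) t)
    (hsign : ∀ s ∈ Ioo a b, ∀ t ∈ Ioo a b, s < t → 0 < f' t → 0 ≤ f' s) (hx : x ∈ Icc a b) :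
    min (f a) (f b) ≤ f x := by
  by_contra! hlt
  obtain ⟨hlt_a, hlt_b⟩ := lt_min_iff.1 hlt
  have hax : a < x := hx.1.lt_of_ne (by rintro rfl; exact hlt_a.false)
  have hxb : x < b := hx.2.lt_of_ne (by rintro rfl; exact hlt_b.false)
  obtain ⟨s, hs, hfs⟩ := exists_hasDerivAt_eq_slope f f' hax
    (hf.mono (Icc_subset_Icc_right hx.2)) fun t ht => hf' t ⟨ht.1, ht.2.trans hxb⟩
  obtain ⟨t, ht, hft⟩ := exists_hasDerivAt_eq_slope f f' hxb
    (hf.mono (Icc_subset_Icc_left hx.1)) fun t ht => hf' t ⟨hax.trans ht.1, ht.2⟩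
  have hneg : f' s < 0 := hfs ▸ div_neg_of_neg_of_pos (by linarith) (by linarith)
  have hpos : 0 < f' t := hft ▸ div_pos (by linarith) (by linarith)
  exact hneg.not_ge <| hsign s ⟨hs.1, hs.2.trans hxb⟩ t ⟨hax.trans ht.1, ht.2⟩
    (hs.2.trans ht.1) hpos

theorem add_le_add_of_concaveOn_of_add_eq {D : Set ℝ} {g : ℝ → ℝ} (hg : ConcaveOn ℝ D g)
    {a b u v : ℝ} (ha : a ∈ D) (hb : b ∈ D) (hu : u ∈ Icc a b) (huv : u + v = a + b) :
    g a + g b ≤ g u + g v := by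
  rw [← segment_eq_Icc (hu.1.trans hu.2)] at hu
  obtain ⟨p, q, hp, hq, hpq, rfl⟩ := hu
  simp only [smul_eq_mul] at huv ⊢
  obtain rfl : v = q * a + p * b := by linear_combination huv - (a + b) * hpq
  have hgu := hg.2 ha hb hp hq hpq
  have hgv := hg.2 ha hb hq hp (by rwa [add_comm])
  simp only [smul_eq_mul] at hgu hgv
  linear_combination hgu + hgv - (g a + g b) * hpq

variable {F L h : ℝ → ℝ}

theorem reflect_le_of_concaveOn (hL : ∀ x ∈ Ioo 0 1, HasDerivAt L (h x) x)
    (hh : ConcaveOn ℝ (Ioo 0 1) fun x => x * (1 - x) * h x) {s t : ℝ} (hs : 0 < s) (hst : s < t)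
    (ht : t < 1 / 2) (hLt : L (1 - t) < L t) : L (1 - s) ≤ L s := by
  have hderiv : ∀ x ∈ Icc s (1 / 2),
      HasDerivAt (fun x => L (1 - x) - L x) (-(h x + h (1 - x))) x := fun x hx => by
    have h₁ := (hL (1 - x) ⟨by linarith [hx.2], by linarith [hx.1]⟩).comp_const_sub 1 x
    exact (h₁.sub (hL x ⟨hs.trans_le hx.1, by linarith [hx.2]⟩)).congr_deriv (by ring)
  have hmin := min_le_of_hasDerivAt_of_sign_change
    (fun x hx => (hderiv x hx).continuousAt.continuousWithinAt)
    (fun x hx => hderiv x (Ioo_subset_Icc_self hx)) ?_ (⟨hst.le, ht.le⟩ : t ∈ Icc s (1 / 2))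
  · rw [show (1 : ℝ) - 1 / 2 = 1 / 2 by norm_num, sub_self] at hmin
    have := (min_lt_iff.1 (hmin.trans_lt (sub_neg.2 hLt))).resolve_right (lt_irrefl 0)
    linarith
  · intro x hx y hy hxy hpos
    have hmono := add_le_add_of_concaveOn_of_add_eq hh (a := x) (b := 1 - x) (u := y) (v := 1 - y)
      ⟨hs.trans hx.1, by linarith [hx.2]⟩ ⟨by linarith [hx.2], by linarith [hx.1]⟩
      ⟨hxy.le, by linarith [hx.2, hy.2]⟩ (by ring)
    have hx0 : 0 < x * (1 - x) := mul_pos (hs.trans hx.1) (by linarith [hx.2])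
    have hy0 : 0 < y * (1 - y) := mul_pos (hs.trans hy.1) (by linarith [hy.2])
    have hy_neg : y * (1 - y) * (h y + h (1 - y)) < 0 := mul_neg_of_pos_of_neg hy0 (by linarith)
    have hx_neg : x * (1 - x) * (h x + h (1 - x)) < 0 := by
      simp only [sub_sub_cancel] at hmono
      linarith
    linarith [neg_of_mul_neg_right hx_neg hx0.le]

theorem min_le_add_reflect_of_concaveOn (hF : ContinuousOn F (Icc 0 1))
    (hF' : ∀ x ∈ Ioo 0 1, HasDerivAt F (exp (L x)) x) (hL : ∀ x ∈ Ioo 0 1, HasDerivAt L (h x) x)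
    (hh : ConcaveOn ℝ (Ioo 0 1) fun x => x * (1 - x) * h x) {x : ℝ} (hx : x ∈ Icc 0 1) :
    min (F 0 + F 1) (2 * F (1 / 2)) ≤ F x + F (1 - x) := by
  wlog hx2 : x ≤ 1 / 2 generalizing x
  · have := this (x := 1 - x) ⟨by linarith [hx.2], by linarith [hx.1]⟩ (by linarith)
    rwa [sub_sub_cancel, add_comm (F (1 - x))] at this
  have hcont : ContinuousOn (fun x => F x + F (1 - x)) (Icc 0 (1 / 2)) :=
    (hF.mono (Icc_subset_Icc_right (by norm_num))).add <| hF.comp (by fun_prop) fun y hy =>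
      ⟨by linarith [hy.2], by linarith [hy.1]⟩
  have hderiv : ∀ y ∈ Ioo (0 : ℝ) (1 / 2),
      HasDerivAt (fun x => F x + F (1 - x)) (exp (L y) - exp (L (1 - y))) y := fun y hy => by
    have h₁ := (hF' (1 - y) ⟨by linarith [hy.2], by linarith [hy.1]⟩).comp_const_sub 1 y
    exact ((hF' y ⟨hy.1, by linarith [hy.2]⟩).add h₁).congr_deriv (by ring)
  have hmin := min_le_of_hasDerivAt_of_sign_change hcont hderiv
    (fun s hs t ht hst hpos => sub_nonneg.2 <| exp_le_exp.2 <|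
      reflect_le_of_concaveOn hL hh hs.1 hst ht.2 (exp_lt_exp.1 (sub_pos.1 hpos))) ⟨hx.1, hx2⟩
  rwa [sub_zero, show (1 : ℝ) - 1 / 2 = 1 / 2 by norm_num, ← two_mul] at hmin

end Symmetrization

theorem convexOn_inv_of_concaveOn {s : Set ℝ} {f : ℝ → ℝ} (hf : ConcaveOn ℝ s f)
    (hpos : ∀ x ∈ s, 0 < f x) : ConvexOn ℝ s fun x => (f x)⁻¹ := by
  refine ⟨hf.1, fun x hx y hy a b ha hb hab => ?_⟩
  have hinv : ConvexOn ℝ (Ioi (0 : ℝ)) (·⁻¹) := by simpa using convexOn_zpow (𝕜 := ℝ) (-1)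
  have hmem := hinv.1 (hpos x hx) (hpos y hy) ha hb hab
  exact (inv_anti₀ hmem (hf.2 hx hy ha hb hab)).trans
    (hinv.2 (hpos x hx) (hpos y hy) ha hb hab)

section Powers

variable {c x : ℝ}

theorem hasDerivAt_rpow_mul_div (c : ℝ) (hx : 0 < x) :
    HasDerivAt (fun x => x ^ c) (c * x ^ c / x) x := by
  refine (hasDerivAt_rpow_const (Or.inl hx.ne')).congr_deriv ?_
  rw [rpow_sub_one hx.ne', mul_div_assoc]

theorem one_sub_rpow_le (hc : 1 ≤ c) (hx : 0 ≤ x) : 1 - x ^ c ≤ c * (1 - x) := by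
  have := one_add_mul_self_le_rpow_one_add (by linarith : -1 ≤ x - 1) hc
  rw [add_sub_cancel] at this
  linarith

theorem mul_rpow_div_le (hc : 1 ≤ c) (hx : 0 < x) : c * x ^ c / x ≤ 1 + (c - 1) * x ^ c := by
  have hy : 0 < x ^ c := rpow_pos_of_pos hx c
  have bernoulli := one_sub_rpow_le hc (inv_pos.2 hx).le
  rw [inv_rpow hx.le] at bernoulli
  have := mul_le_mul_of_nonneg_left bernoulli hy.le
  rw [mul_sub, mul_inv_cancel₀ hy.ne'] at this
  linear_combination this

theorem mul_sub_rpow_le (hc : 1 ≤ c) (hx : 0 < x) (hx1 : x ≤ 1) :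
    (c + 1) * (x - x ^ c) ≤ (c - 1) * (1 - x ^ c * x) := by
  set gap : ℝ → ℝ := fun t => (c - 1) * (1 - t ^ c * t) - (c + 1) * (t - t ^ c)
  have hderiv : ∀ t ∈ Icc x 1,
      HasDerivAt gap ((c + 1) * (c * t ^ c / t - (1 + (c - 1) * t ^ c))) t := fun t ht => by
    have ht0 : 0 < t := hx.trans_le ht.1
    have hpow := hasDerivAt_rpow_mul_div c ht0
    refine ((((hpow.mul (hasDerivAt_id t)).const_sub 1).const_mul (c - 1)).sub
      (((hasDerivAt_id t).sub hpow).const_mul (c + 1))).congr_deriv ?_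
    simp only [id]
    field_simp
    ring
  have hanti : AntitoneOn gap (Icc x 1) := by
    refine antitoneOn_of_hasDerivWithinAt_nonpos (convex_Icc x 1)
      (fun t ht => (hderiv t ht).continuousAt.continuousWithinAt)
      (fun t ht => (hderiv t (interior_subset ht)).hasDerivWithinAt) fun t ht => ?_
    have := mul_rpow_div_le hc (hx.trans_le (interior_subset ht).1)
    exact mul_nonpos_of_nonneg_of_nonpos (by linarith) (by linarith)
  have hgap : gap 1 ≤ gap x := hanti ⟨le_rfl, hx1⟩ ⟨hx1, le_rfl⟩ hx1
  simp only [gap, one_rpow] at hgap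
  linarith

theorem hasDerivAt_one_sub_mul_rpow_div (hc : 0 < c) (hx : x ∈ Ioo 0 1) :
    HasDerivAt (fun x => (1 - x) * x ^ c / (1 - x ^ c))
      (x ^ c * (c * (1 - x) - x * (1 - x ^ c)) / (x * (1 - x ^ c) ^ 2)) x := by
  have hx0 : x ≠ 0 := hx.1.ne'
  have hy : 1 - x ^ c ≠ 0 := (sub_pos.2 (rpow_lt_one hx.1.le hx.2 hc)).ne'
  have hpow := hasDerivAt_rpow_mul_div c hx.1
  refine ((((hasDerivAt_id x).const_sub 1).mul hpow).div (hpow.const_sub 1) hy).congr_deriv ?_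
  simp only [id, Pi.mul_apply]
  field_simp
  ring

theorem monotoneOn_one_sub_mul_rpow_div (hc : 1 ≤ c) :
    MonotoneOn (fun x : ℝ => (1 - x) * x ^ c / (1 - x ^ c)) (Ioo 0 1) := by
  have hderiv := fun x (hx : x ∈ Ioo (0 : ℝ) 1) =>
    hasDerivAt_one_sub_mul_rpow_div (one_pos.trans_le hc) hx
  refine monotoneOn_of_hasDerivWithinAt_nonneg (convex_Ioo 0 1)
    (fun x hx => (hderiv x hx).continuousAt.continuousWithinAt)
    (fun x hx => (hderiv x (interior_subset hx)).hasDerivWithinAt) fun x hx => ?_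
  rw [interior_Ioo] at hx
  have hx0 := hx.1
  have hy1 : 0 < 1 - x ^ c := sub_pos.2 (rpow_lt_one hx.1.le hx.2 (by linarith))
  have hle : x * (1 - x ^ c) ≤ c * (1 - x) :=
    (mul_le_of_le_one_left hy1.le hx.2.le).trans (one_sub_rpow_le hc hx.1.le)
  have := sub_nonneg.2 hle
  positivity

theorem convexOn_one_sub_mul_rpow_div (hc : 1 ≤ c) :
    ConvexOn ℝ (Ioo 0 1) fun x : ℝ => (1 - x) * x ^ c / (1 - x ^ c) := by
  have hc0 : 0 < c := one_pos.trans_le hc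
  have hderiv := fun x (hx : x ∈ Ioo (0 : ℝ) 1) => hasDerivAt_one_sub_mul_rpow_div hc0 hx
  refine convexOn_of_hasDerivWithinAt2_nonneg (convex_Ioo 0 1)
    (f'' := fun x => c * x ^ c * ((c - 1) * (1 - x ^ c * x) - (c + 1) * (x - x ^ c))
      / (x ^ 2 * (1 - x ^ c) ^ 3))
    (fun x hx => (hderiv x hx).continuousAt.continuousWithinAt)
    (fun x hx => (hderiv x (interior_subset hx)).hasDerivWithinAt)
    (fun x hx => ?_) (fun x hx => ?_) <;> rw [interior_Ioo] at hx <;> have hx0 := hx.1 <;>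
    have hy1 : 0 < 1 - x ^ c := sub_pos.2 (rpow_lt_one hx.1.le hx.2 hc0)
  · have hpow := hasDerivAt_rpow_mul_div c hx0
    have hid := hasDerivAt_id x
    refine HasDerivAt.hasDerivWithinAt <| ((hpow.mul (((hid.const_sub 1).const_mul c).sub
      (hid.mul (hpow.const_sub 1)))).div (hid.mul ((hpow.const_sub 1).pow 2))
      (mul_pos hx0 (pow_pos hy1 2)).ne').congr_deriv ?_
    simp only [id, Pi.mul_apply, Pi.sub_apply, Pi.pow_apply]
    field_simp
    ring
  · have := sub_nonneg.2 (mul_sub_rpow_le hc hx0 hx.2.le)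
    positivity

theorem convexOn_one_sub_mul_rpow_div_mul (hc : 1 ≤ c) {S : ℝ} (hS0 : 0 ≤ S) (hS1 : S ≤ 1) :
    ConvexOn ℝ (Ioo 0 1) fun x : ℝ =>
      (1 - x) * x ^ c / (1 - x ^ c) * (S + (1 - S) * (2 - x ^ c)⁻¹) := by
  have hc0 : 0 < c := one_pos.trans_le hc
  have hlt : ∀ x ∈ Ioo (0 : ℝ) 1, x ^ c < 1 := fun x hx => rpow_lt_one hx.1.le hx.2 hc0
  have hpow : ConvexOn ℝ (Ioo (0 : ℝ) 1) fun x => x ^ c :=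
    (convexOn_rpow hc).subset (fun x hx => hx.1.le) (convex_Ioo 0 1)
  have hinv : ConvexOn ℝ (Ioo (0 : ℝ) 1) fun x => (2 - x ^ c)⁻¹ :=
    convexOn_inv_of_concaveOn ((concaveOn_const 2 (convex_Ioo 0 1)).sub hpow)
      fun x hx => by linarith [hlt x hx]
  have hmono : MonotoneOn (fun x : ℝ => S + (1 - S) * (2 - x ^ c)⁻¹) (Ioo 0 1) :=
    fun x hx y hy hxy => by
      have := rpow_le_rpow hx.1.le hxy hc0.le
      have := inv_anti₀ (by linarith [hlt y hy]) (sub_le_sub_left this 2)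
      have := mul_le_mul_of_nonneg_left this (sub_nonneg.2 hS1)
      simpa using this
  refine (convexOn_one_sub_mul_rpow_div hc).mul
    ((convexOn_const S (convex_Ioo 0 1)).add (hinv.smul (sub_nonneg.2 hS1)))
    (fun x hx => ?_) (fun x hx => ?_) ((monotoneOn_one_sub_mul_rpow_div hc).monovaryOn hmono)
  · have := hx.1
    have := sub_pos.2 hx.2
    have := sub_pos.2 (hlt x hx)
    positivity
  · have := sub_nonneg.2 hS1
    have : 0 < 2 - x ^ c := by linarith [hlt x hx]
    positivity

end Powers

section ConjugateMap

variable {c S x : ℝ}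

/-- The map `w ↦ 1 - (1 - w) ^ 2` in power coordinates: `x` stands for the argument `w = x ^ c`, and
the result `y` stands for the value `y ^ (1 / S)`. -/
noncomputable def powConj (c S x : ℝ) : ℝ := (1 - (1 - x ^ c) ^ 2) ^ S

/-- The logarithm of the derivative of `powConj c S` on `(0, 1)`. -/
noncomputable def logSlopePowConj (c S x : ℝ) : ℝ :=
  log (2 * S * c) + (S - 1) * log (1 - (1 - x ^ c) ^ 2) + log (1 - x ^ c) + (c - 1) * log x

theorem one_sub_one_sub_rpow_sq_pos (hc : 0 < c) (hx : x ∈ Ioo 0 1) :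
    0 < 1 - (1 - x ^ c) ^ 2 := by
  have hy0 := rpow_pos_of_pos hx.1 c
  have hy1 := rpow_lt_one hx.1.le hx.2 hc
  nlinarith

theorem hasDerivAt_powConj (hc : 0 < c) (hS : 0 < S) (hx : x ∈ Ioo 0 1) :
    HasDerivAt (powConj c S) (exp (logSlopePowConj c S x)) x := by
  have hx0 := hx.1
  have hy1 : 0 < 1 - x ^ c := sub_pos.2 (rpow_lt_one hx.1.le hx.2 hc)
  have hw := one_sub_one_sub_rpow_sq_pos hc hx
  have hexp : exp (logSlopePowConj c S x)
      = 2 * S * c * (1 - (1 - x ^ c) ^ 2) ^ (S - 1) * (1 - x ^ c) * x ^ (c - 1) := by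
    rw [logSlopePowConj, exp_add, exp_add, exp_add, exp_log (by positivity), exp_log hy1,
      mul_comm (S - 1), mul_comm (c - 1), ← rpow_def_of_pos hw, ← rpow_def_of_pos hx0]
  have hpow := hasDerivAt_rpow_const (p := c) (Or.inl hx0.ne')
  refine ((((hpow.const_sub 1).pow 2).const_sub 1).rpow_const (Or.inl hw.ne')).congr_deriv ?_
  rw [hexp]
  simp only [Pi.pow_apply]
  push_cast
  ring

theorem hasDerivAt_logSlopePowConj (hc : 0 < c) (hx : x ∈ Ioo 0 1) :
    HasDerivAt (logSlopePowConj c S)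
      ((S - 1) * (2 * c * x ^ c * (1 - x ^ c) / (x * (1 - (1 - x ^ c) ^ 2)))
        - c * x ^ c / (x * (1 - x ^ c)) + (c - 1) / x) x := by
  have hx0 := hx.1
  have hy1 : 0 < 1 - x ^ c := sub_pos.2 (rpow_lt_one hx.1.le hx.2 hc)
  have hw := one_sub_one_sub_rpow_sq_pos hc hx
  have hpow := (hasDerivAt_rpow_mul_div c hx0).const_sub 1
  refine ((((((hpow.pow 2).const_sub 1).log hw.ne').const_mul (S - 1)).const_add
    (log (2 * S * c))).add (hpow.log hy1.ne') |>.add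
    ((hasDerivAt_log hx0.ne').const_mul (c - 1))).congr_deriv ?_
  simp only [Pi.pow_apply]
  field_simp
  push_cast
  ring

theorem concaveOn_mul_deriv_logSlopePowConj (hc : 1 ≤ c) (hS0 : 0 ≤ S) (hS1 : S ≤ 1) :
    ConcaveOn ℝ (Ioo 0 1) fun x => x * (1 - x) * deriv (logSlopePowConj c S) x := by
  have hc0 : 0 < c := one_pos.trans_le hc
  have haffine : ConcaveOn ℝ (Ioo (0 : ℝ) 1) fun x => (c * S - 1) * (1 - x) :=
    ⟨convex_Ioo 0 1, fun x _ y _ a b _ _ hab => by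
      simp only [smul_eq_mul]
      exact le_of_eq (by linear_combination (c * S - 1) * hab)⟩
  refine (haffine.sub ((convexOn_one_sub_mul_rpow_div_mul hc hS0 hS1).smul hc0.le)).congr ?_
  intro x hx
  have hx0 := hx.1
  have hy0 := rpow_pos_of_pos hx0 c
  have hlt := rpow_lt_one hx.1.le hx.2 hc0
  have hy1 : 0 < 1 - x ^ c := sub_pos.2 hlt
  have hy2 : 0 < 2 - x ^ c := by linarith
  have hw : 1 - (1 - x ^ c) ^ 2 = x ^ c * (2 - x ^ c) := by ring
  simp only [Pi.sub_apply, smul_eq_mul, (hasDerivAt_logSlopePowConj hc0 hx).deriv, hw]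
  field_simp
  ring

theorem one_le_powConj_add_powConj_one_sub (hc : 1 ≤ c) (hS0 : 0 < S) (hS1 : S ≤ 1)
    (hhalf : 1 / 2 ≤ powConj c S (1 / 2)) (hx : x ∈ Icc 0 1) :
    1 ≤ powConj c S x + powConj c S (1 - x) := by
  have hc0 : 0 < c := one_pos.trans_le hc
  have hcont : Continuous (powConj c S) :=
    (continuous_const.sub ((continuous_const.sub (continuous_rpow_const hc0.le)).pow 2)).rpow_const
      fun _ => Or.inr hS0.le
  have hends : powConj c S 0 + powConj c S 1 = 1 := by
    simp [powConj, zero_rpow hc0.ne', zero_rpow hS0.ne']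
  calc 1 ≤ min (powConj c S 0 + powConj c S 1) (2 * powConj c S (1 / 2)) :=
        le_min hends.ge (by linarith)
    _ ≤ powConj c S x + powConj c S (1 - x) :=
        min_le_add_reflect_of_concaveOn hcont.continuousOn
          (fun _ hy => hasDerivAt_powConj hc0 hS0 hy)
          (fun _ hy => (hasDerivAt_logSlopePowConj hc0 hy).differentiableAt.hasDerivAt)
          (concaveOn_mul_deriv_logSlopePowConj hc hS0.le hS1) hx

end ConjugateMap

/-- The pair `(u, v)` lies above the curve `y ↦ (y ^ c, (1 - y) ^ c)`, `y ∈ [0, 1]`, coordinatewise.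
This is the invariant carried by `(I x, I (1 - x))`, where `I (1 / 2) = (1 / 2) ^ c`. -/
def AbovePowCurve (c u v : ℝ) : Prop := ∃ y ∈ Icc (0 : ℝ) 1, y ^ c ≤ u ∧ (1 - y) ^ c ≤ v

namespace AbovePowCurve

variable {c u v : ℝ}

theorem one_le_add (h : AbovePowCurve 1 u v) : 1 ≤ u + v := by
  obtain ⟨y, -, hu, hv⟩ := h
  rw [rpow_one] at hu hv
  linarith

theorem sq (h : AbovePowCurve c u v) : AbovePowCurve (c * 2) (u ^ 2) (v ^ 2) := by
  obtain ⟨y, hy, hu, hv⟩ := h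
  have hy' : 0 ≤ 1 - y := sub_nonneg.2 hy.2
  refine ⟨y, hy, ?_, ?_⟩
  · rw [rpow_mul hy.1, rpow_two]
    exact pow_le_pow_left₀ (rpow_nonneg hy.1 c) hu 2
  · rw [rpow_mul hy', rpow_two]
    exact pow_le_pow_left₀ (rpow_nonneg hy' c) hv 2

theorem one_sub_one_sub_sq {C : ℝ} (h : AbovePowCurve c u v) (hc : 1 ≤ c) (hC : 1 ≤ C)
    (hhalf : (1 / 2) ^ C ≤ 1 - (1 - (1 / 2 : ℝ) ^ c) ^ 2) (hu1 : u ≤ 1) (hv1 : v ≤ 1) :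
    AbovePowCurve C (1 - (1 - u) ^ 2) (1 - (1 - v) ^ 2) := by
  obtain ⟨y, hy, hu, hv⟩ := h
  have hy' : 1 - y ∈ Icc (0 : ℝ) 1 := ⟨sub_nonneg.2 hy.2, sub_le_self 1 hy.1⟩
  have hC0 : 0 < C := one_pos.trans_le hC
  have hbase : ∀ x ∈ Icc (0 : ℝ) 1, 0 ≤ 1 - (1 - x ^ c) ^ 2 ∧ 1 - (1 - x ^ c) ^ 2 ≤ 1 :=
    fun x hx => by
      have h0 := rpow_nonneg hx.1 c
      have h1 := rpow_le_one hx.1 hx.2 (by linarith : 0 ≤ c)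
      constructor <;> nlinarith
  have hle : ∀ {x w : ℝ}, x ^ c ≤ w → w ≤ 1 → 1 - (1 - x ^ c) ^ 2 ≤ 1 - (1 - w) ^ 2 :=
    fun hxw hw => sub_le_sub_left (pow_le_pow_left₀ (by linarith) (by linarith) 2) 1
  have hsum : 1 ≤ powConj c C⁻¹ y + powConj c C⁻¹ (1 - y) := by
    refine one_le_powConj_add_powConj_one_sub hc (inv_pos.2 hC0) (inv_le_one_of_one_le₀ hC) ?_ hy
    exact (le_rpow_inv_iff_of_pos (by norm_num) (hbase _ (by norm_num)).1 hC0).2 hhalf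
  have hpow : ∀ x ∈ Icc (0 : ℝ) 1, powConj c C⁻¹ x ^ C = 1 - (1 - x ^ c) ^ 2 :=
    fun x hx => rpow_inv_rpow (hbase x hx).1 hC0.ne'
  have hmem : powConj c C⁻¹ y ∈ Icc (0 : ℝ) 1 :=
    ⟨rpow_nonneg (hbase y hy).1 _,
      rpow_le_one (hbase y hy).1 (hbase y hy).2 (inv_pos.2 hC0).le⟩
  refine ⟨powConj c C⁻¹ y, hmem, (hpow y hy).trans_le (hle hu hu1), ?_⟩
  calc (1 - powConj c C⁻¹ y) ^ C ≤ powConj c C⁻¹ (1 - y) ^ C :=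
        rpow_le_rpow (sub_nonneg.2 hmem.2) (by linarith) hC0.le
    _ = 1 - (1 - (1 - y) ^ c) ^ 2 := hpow (1 - y) hy'
    _ ≤ 1 - (1 - v) ^ 2 := hle hv hv1

end AbovePowCurve

theorem exists_one_le_half_rpow_eq {z : ℝ} (hz0 : 0 < z) (hz : z ≤ 1 / 2) :
    ∃ c : ℝ, 1 ≤ c ∧ (1 / 2) ^ c = z := by
  have hpow : (1 / 2 : ℝ) ^ logb (1 / 2) z = z := rpow_logb (by norm_num) (by norm_num) hz0
  refine ⟨logb (1 / 2) z, ?_, hpow⟩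
  rw [← rpow_le_rpow_left_iff_of_base_lt_one (by norm_num : (0 : ℝ) < 1 / 2) (by norm_num), hpow,
    rpow_one]
  exact hz

section Istr

variable {l : List ℕ} {a : ℕ → ℕ} {m : ℕ} {x : ℝ}

theorem Istr_append (l₁ l₂ : List ℕ) (x : ℝ) : Istr (l₁ ++ l₂) x = Istr l₂ (Istr l₁ x) := by
  induction l₁ generalizing x with
  | nil => rfl
  | cons w _ ih => exact ih _

theorem Istr_map_range_succ (a : ℕ → ℕ) (m : ℕ) (x : ℝ) :
    Istr ((List.range (m + 1)).map a) x =
      if a m = 0 then Istr ((List.range m).map a) x ^ 2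
      else 1 - (1 - Istr ((List.range m).map a) x) ^ 2 := by
  rw [List.range_succ, List.map_append, Istr_append]
  rfl

theorem Istr_map_one_sub (l : List ℕ) (x : ℝ) :
    Istr (l.map fun w => 1 - w) x = 1 - Istr l (1 - x) := by
  induction l generalizing x with
  | nil => simp [Istr]
  | cons w l ih =>
    rw [List.map_cons, Istr, Istr, ih]
    rcases Nat.eq_zero_or_pos w with rfl | hw
    · simp
    · simp [hw.ne', Nat.sub_eq_zero_of_le hw]

theorem Istr_mem_Icc (hx : x ∈ Icc 0 1) : Istr l x ∈ Icc 0 1 := by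
  induction l generalizing x with
  | nil => exact hx
  | cons w _ ih =>
    refine ih ?_
    obtain ⟨h0, h1⟩ := hx
    split_ifs <;> constructor <;> nlinarith

theorem exists_abovePowCurve_Istr
    (hpre : ∀ k, 1 ≤ k → k ≤ m → Istr ((List.range k).map a) (1 / 2) ≤ 1 / 2)
    (hx : x ∈ Icc 0 1) :
    ∃ c : ℝ, 1 ≤ c ∧ (1 / 2) ^ c = Istr ((List.range m).map a) (1 / 2) ∧
      AbovePowCurve c (Istr ((List.range m).map a) x) (Istr ((List.range m).map a) (1 - x)) := by
  have hx' : 1 - x ∈ Icc (0 : ℝ) 1 := ⟨sub_nonneg.2 hx.2, sub_le_self 1 hx.1⟩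
  induction m with
  | zero => exact ⟨1, le_rfl, rpow_one _, x, hx, (rpow_one x).le, (rpow_one (1 - x)).le⟩
  | succ m ih =>
    obtain ⟨c, hc, hz, hcurve⟩ := ih fun k hk hkm => hpre k hk (hkm.trans m.le_succ)
    have hz' := hpre (m + 1) m.succ_pos le_rfl
    simp only [Istr_map_range_succ, ← hz] at hz' ⊢
    split_ifs at hz' ⊢
    · refine ⟨c * 2, by linarith, ?_, hcurve.sq⟩
      rw [rpow_mul (by norm_num), rpow_two]
    · have hpos := one_sub_one_sub_rpow_sq_pos (x := 1 / 2) (one_pos.trans_le hc) (by norm_num)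
      obtain ⟨C, hC, hCz⟩ := exists_one_le_half_rpow_eq hpos hz'
      exact ⟨C, hC, hCz, hcurve.one_sub_one_sub_sq hc hC hCz.le (Istr_mem_Icc hx).2
        (Istr_mem_Icc hx').2⟩

theorem one_le_Istr_add_Istr_one_sub
    (hpre : ∀ k, 1 ≤ k → k ≤ m → Istr ((List.range k).map a) (1 / 2) ≤ 1 / 2)
    (hend : 1 / 2 ≤ Istr ((List.range (m + 1)).map a) (1 / 2)) (hx : x ∈ Icc 0 1) :
    1 ≤ Istr ((List.range (m + 1)).map a) x + Istr ((List.range (m + 1)).map a) (1 - x) := by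
  have hx' : 1 - x ∈ Icc (0 : ℝ) 1 := ⟨sub_nonneg.2 hx.2, sub_le_self 1 hx.1⟩
  obtain ⟨c, hc, hz, hcurve⟩ := exists_abovePowCurve_Istr hpre hx
  simp only [Istr_map_range_succ, ← hz] at hend ⊢
  split_ifs at hend ⊢
  · have hz_half : (1 / 2 : ℝ) ^ c ≤ 1 / 2 :=
      (rpow_le_rpow_of_exponent_ge (by norm_num) (by norm_num) hc).trans_eq (rpow_one _)
    have hz_pos : (0 : ℝ) < (1 / 2) ^ c := by positivity
    nlinarith
  · exact (hcurve.one_sub_one_sub_sq hc le_rfl ((rpow_one _).trans_le hend) (Istr_mem_Icc hx).2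
      (Istr_mem_Icc hx').2).one_le_add

end Istr

/-- Dyck-path corollary: if the bit string `a₁⋯aₙ` keeps `I` at most `1/2` on
all proper prefixes and at least `1/2` at the end, then `a₁⋯aₙ ≽ b₁⋯bₙ` where
`bⱼ = 1 − aⱼ`. -/
theorem stmt_19 (n : ℕ) (hn : 1 < n) (a : ℕ → ℕ) (ha : ∀ j < n, a j ≤ 1)
    (hpre : ∀ m, 1 ≤ m → m ≤ n - 1 →
      Istr ((List.range m).map a) (1 / 2) ≤ 1 / 2)
    (hend : Istr ((List.range n).map a) (1 / 2) ≥ 1 / 2) :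
    ∀ x ∈ Set.Icc (0 : ℝ) 1,
      Istr ((List.range n).map a) x ≥ Istr ((List.range n).map (fun j => 1 - a j)) x := by
  intro x hx
  obtain ⟨m, rfl⟩ : ∃ m, n = m + 1 := ⟨n - 1, by omega⟩
  have hcompl := Istr_map_one_sub ((List.range (m + 1)).map a) x
  rw [List.map_map] at hcompl
  have hsum := one_le_Istr_add_Istr_one_sub (m := m) hpre hend hx
  exact hcompl.trans_le (by linarith)
end
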